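/- arXiv:math-ph/0308007 — 4 statements merged into one kernel-verified Lean document; each statement's English description precedes it below -/
import Mathlib

section
/- Let d ≥ 2 and r ∈ ℝ. Every smooth, spatially compactly supported solution U of (∂₀² − Δ + r)U = 0 on ℝ^d is of the form U = EF for some F ∈ C_c^∞(ℝ^d, ℝ), where EF = E^+F − E^−F is the difference of the retarded and advanced solutions for F. -/
/-!
Let `χ` be a smooth cutoff in time, `0` for `t ≤ 0` and `1` for `t ≥ 1`. Put `G⁺ = χU`,
`G⁻ = (χ - 1)U` and `F = (∂₀² - Δ + r)(χU)`. Then `G⁺ - G⁻ = U`, both functions solve the equation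
with source `F`, and `F` is supported in `supp U ∩ {0 ≤ t ≤ 1}`, which is compact. What remains
is that `G^±` is supported in the causal future/past of `supp F`, i.e. finite propagation speed.

For a function `V` vanishing in the far past, take a point `z` outside the closed set
`J⁺(supp KG V)`. A past cone with apex slightly above `z` still misses `supp KG V`. The weight
`W = e^{-λt} ψ(T - t - √(ε² + |x - x₀|²))` is supported in this cone, positive at `z`, and satisfies
`∂₀W + λW ≤ -|∇W|`. The current `(W e, -W ∂₀V ∇V)`, with `e = ½(|∂₀V|² + |∇V|² + V²)`, is
compactly supported in space-time, so its divergence integrates to zero; on the other hand, for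
`λ = |1 - r| + 1` that divergence is pointwise at most `-W e`. Hence `W e = 0` everywhere
(`weight_mul_eq_zero`) and `V z = 0` (`tsupport_subset_Jplus`). The statement for the causal past
follows by time reversal (`tsupport_subset_Jminus`).
-/

open Real Set MeasureTheory

noncomputable section

/-- time derivative `∂₀U` of a function on ℝ^d = ℝ × ℝ^{d−1}. -/
def d0 {m : ℕ} (U : ℝ × (Fin m → ℝ) → ℝ) : ℝ × (Fin m → ℝ) → ℝ :=
  fun z => fderiv ℝ U z (1, 0)

/-- spatial derivative `∂ₖU`. -/
def dk {m : ℕ} (k : Fin m) (U : ℝ × (Fin m → ℝ) → ℝ) : ℝ × (Fin m → ℝ) → ℝ :=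
  fun z => fderiv ℝ U z (0, Pi.single k 1)

/-- Klein–Gordon operator `∂₀² − Δ + r` with mass-squared `r`. -/
def KG {m : ℕ} (r : ℝ) (U : ℝ × (Fin m → ℝ) → ℝ) : ℝ × (Fin m → ℝ) → ℝ :=
  fun z => d0 (d0 U) z - (∑ k, dk k (dk k U) z) + r * U z

/-- Minkowski form `η(z,w) = −z⁰w⁰ + z⃗·w⃗`. -/
def mink {m : ℕ} (z w : ℝ × (Fin m → ℝ)) : ℝ := -(z.1 * w.1) + ∑ k, z.2 k * w.2 k

/-- causal future `J⁺(S)`. -/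
def Jplus {m : ℕ} (S : Set (ℝ × (Fin m → ℝ))) : Set (ℝ × (Fin m → ℝ)) :=
  {z | ∃ w ∈ S, mink (z - w) (z - w) ≤ 0 ∧ 0 ≤ z.1 - w.1}

/-- causal past `J⁻(S)`. -/
def Jminus {m : ℕ} (S : Set (ℝ × (Fin m → ℝ))) : Set (ℝ × (Fin m → ℝ)) :=
  {z | ∃ w ∈ S, mink (z - w) (z - w) ≤ 0 ∧ 0 ≤ -(z.1 - w.1)}

/-- spatially compactly supported. -/
def SpatCompact {m : ℕ} (U : ℝ × (Fin m → ℝ) → ℝ) : Prop :=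
  ∀ T > (0:ℝ), IsCompact (tsupport U ∩ (Icc (-T) T ×ˢ (univ : Set (Fin m → ℝ))))

/-- the symplectic form `σ_t(U,V) = ∫ (U ∂₀V − ∂₀U V)(t,x⃗) dx⃗`. -/
def sigmaT {m : ℕ} (t : ℝ) (U V : ℝ × (Fin m → ℝ) → ℝ) : ℝ :=
  ∫ x : Fin m → ℝ, (U (t, x) * d0 V (t, x) - d0 U (t, x) * V (t, x))

section Aux

variable {m : ℕ}

/-! ### Differential calculus for the Klein–Gordon operator -/

lemma contDiff_fderiv_dir {f : ℝ × (Fin m → ℝ) → ℝ} (hf : ContDiff ℝ (⊤ : ℕ∞) f)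
    (v : ℝ × (Fin m → ℝ)) : ContDiff ℝ (⊤ : ℕ∞) (fun z => fderiv ℝ f z v) :=
  (hf.fderiv_right (by simp)).clm_apply contDiff_const

lemma contDiff_d0 {f : ℝ × (Fin m → ℝ) → ℝ} (hf : ContDiff ℝ (⊤ : ℕ∞) f) :
    ContDiff ℝ (⊤ : ℕ∞) (d0 f) := contDiff_fderiv_dir hf _

lemma contDiff_dk {f : ℝ × (Fin m → ℝ) → ℝ} (hf : ContDiff ℝ (⊤ : ℕ∞) f) (k : Fin m) :
    ContDiff ℝ (⊤ : ℕ∞) (dk k f) := contDiff_fderiv_dir hf _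

lemma contDiff_KG (r : ℝ) {f : ℝ × (Fin m → ℝ) → ℝ} (hf : ContDiff ℝ (⊤ : ℕ∞) f) :
    ContDiff ℝ (⊤ : ℕ∞) (KG r f) :=
  ((contDiff_d0 (contDiff_d0 hf)).sub
    (ContDiff.sum fun k _ => contDiff_dk (contDiff_dk hf k) k)).add (contDiff_const.mul hf)

lemma dk_d0_comm {f : ℝ × (Fin m → ℝ) → ℝ} (hf : ContDiff ℝ (⊤ : ℕ∞) f) (k : Fin m)
    (z : ℝ × (Fin m → ℝ)) : dk k (d0 f) z = d0 (dk k f) z := by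
  have hd : DifferentiableAt ℝ (fderiv ℝ f) z :=
    (hf.fderiv_right (m := ((⊤ : ℕ∞) : WithTop ℕ∞)) (by simp)).differentiable (by simp) z
  have key : ∀ v w : ℝ × (Fin m → ℝ),
      fderiv ℝ (fun y => fderiv ℝ f y v) z w = fderiv ℝ (fderiv ℝ f) z w v := by
    intro v w
    rw [fderiv_clm_apply hd (differentiableAt_const v)]
    simp
  have hs : IsSymmSndFDerivAt ℝ f z :=
    hf.contDiffAt.isSymmSndFDerivAt
      (by simpa using (WithTop.coe_le_coe.mpr le_top : ((2 : ℕ∞) : WithTop ℕ∞) ≤ ((⊤ : ℕ∞) : WithTop ℕ∞)))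
  change fderiv ℝ (fun y => fderiv ℝ f y _) z _ = fderiv ℝ (fun y => fderiv ℝ f y _) z _
  rw [key, key]
  exact hs.eq _ _

lemma KG_congr (r : ℝ) {f g : ℝ × (Fin m → ℝ) → ℝ} {z : ℝ × (Fin m → ℝ)}
    (h : f =ᶠ[nhds z] g) : KG r f z = KG r g z := by
  have h0 : d0 f =ᶠ[nhds z] d0 g := by
    filter_upwards [h.fderiv (𝕜 := ℝ)] with y hy using by simp only [d0, hy]
  have hk : ∀ k, dk k f =ᶠ[nhds z] dk k g := fun k => by
    filter_upwards [h.fderiv (𝕜 := ℝ)] with y hy using by simp only [dk, hy]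
  have h00 : d0 (d0 f) z = d0 (d0 g) z := by
    change fderiv ℝ _ z _ = fderiv ℝ _ z _
    rw [h0.fderiv_eq]
  have hkk : ∀ k, dk k (dk k f) z = dk k (dk k g) z := fun k => by
    change fderiv ℝ _ z _ = fderiv ℝ _ z _
    rw [(hk k).fderiv_eq]
  simp only [KG, h00, hkk, h.eq_of_nhds]

lemma KG_zero (r : ℝ) (z : ℝ × (Fin m → ℝ)) : KG r (fun _ => (0 : ℝ)) z = 0 := by
  have h0 : d0 (fun _ : ℝ × (Fin m → ℝ) => (0 : ℝ)) = fun _ => 0 := by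
    funext y; simp [d0]
  have hk : ∀ k, dk k (fun _ : ℝ × (Fin m → ℝ) => (0 : ℝ)) = fun _ => 0 := by
    intro k; funext y; simp [dk]
  simp [KG, h0, hk]

lemma KG_sub (r : ℝ) {f g : ℝ × (Fin m → ℝ) → ℝ} (hf : ContDiff ℝ (⊤ : ℕ∞) f)
    (hg : ContDiff ℝ (⊤ : ℕ∞) g) (z : ℝ × (Fin m → ℝ)) :
    KG r (fun y => f y - g y) z = KG r f z - KG r g z := by
  have key : ∀ {f g : ℝ × (Fin m → ℝ) → ℝ} (_ : ContDiff ℝ (⊤ : ℕ∞) f)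
      (_ : ContDiff ℝ (⊤ : ℕ∞) g) (v y : ℝ × (Fin m → ℝ)),
      fderiv ℝ (fun y => f y - g y) y v = fderiv ℝ f y v - fderiv ℝ g y v := by
    intro f g hf hg v y
    rw [fderiv_fun_sub (hf.differentiable (by simp) y) (hg.differentiable (by simp) y)]
    simp
  have h0 : d0 (fun y => f y - g y) = fun y => d0 f y - d0 g y := funext (key hf hg _)
  have hk : ∀ k, dk k (fun y => f y - g y) = fun y => dk k f y - dk k g y :=
    fun k => funext (key hf hg _)
  have h00 : d0 (fun y => d0 f y - d0 g y) z = d0 (d0 f) z - d0 (d0 g) z :=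
    key (contDiff_d0 hf) (contDiff_d0 hg) _ _
  have hkk : ∀ k, dk k (fun y => dk k f y - dk k g y) z = dk k (dk k f) z - dk k (dk k g) z :=
    fun k => key (contDiff_dk hf k) (contDiff_dk hg k) _ _
  simp only [KG, h0, hk, h00, hkk, Finset.sum_sub_distrib]
  ring

/-! ### The weighted energy estimate -/

/-- A directional derivative of a compactly supported `C¹` function integrates to zero. -/
lemma integral_fderiv_dir_eq_zero {f : ℝ × (Fin m → ℝ) → ℝ} (hf : ContDiff ℝ 1 f)
    (hc : HasCompactSupport f) (v : ℝ × (Fin m → ℝ)) :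
    Integrable (fun z => fderiv ℝ f z v) ∧ ∫ z, fderiv ℝ f z v = 0 := by
  have hi : Integrable (fun z => fderiv ℝ f z v) :=
    ((hf.continuous_fderiv (by simp)).clm_apply continuous_const).integrable_of_hasCompactSupport
      (hc.fderiv_apply (𝕜 := ℝ) v)
  refine ⟨hi, ?_⟩
  have : (volume : Measure (ℝ × (Fin m → ℝ))).IsAddHaarMeasure :=
    inferInstanceAs ((volume : Measure ℝ).prod (volume : Measure (Fin m → ℝ))).IsAddHaarMeasure
  have := integral_mul_fderiv_eq_neg_fderiv_mul_of_integrable (μ := volume)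
    (f := fun _ : ℝ × (Fin m → ℝ) => (1 : ℝ)) (g := f) (v := v)
    (by simp) (by simpa using hi)
    (by simpa using hf.continuous.integrable_of_hasCompactSupport hc)
    (fun x _ => differentiableAt_const _) (fun x _ => hf.differentiable (by simp) x)
  simpa using this

/-- The energy density `½(|∂₀V|² + |∇V|² + |V|²)`. The zeroth-order coefficient is `1` rather
than `r`, so that the density is nonnegative for every sign of `r`. -/
def energy (V : ℝ × (Fin m → ℝ) → ℝ) (z : ℝ × (Fin m → ℝ)) : ℝ :=
  (d0 V z * d0 V z + (∑ k, dk k V z * dk k V z) + V z * V z) / 2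

lemma sum_dk_sq_nonneg (V : ℝ × (Fin m → ℝ) → ℝ) (z : ℝ × (Fin m → ℝ)) :
    0 ≤ ∑ k, dk k V z * dk k V z := Finset.sum_nonneg fun _ _ => mul_self_nonneg _

lemma energy_nonneg (V : ℝ × (Fin m → ℝ) → ℝ) (z : ℝ × (Fin m → ℝ)) : 0 ≤ energy V z := by
  have := sum_dk_sq_nonneg V z
  unfold energy
  nlinarith [mul_self_nonneg (d0 V z), mul_self_nonneg (V z)]

lemma contDiff_energy {V : ℝ × (Fin m → ℝ) → ℝ} (hV : ContDiff ℝ (⊤ : ℕ∞) V) :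
    ContDiff ℝ (⊤ : ℕ∞) (energy V) :=
  ((((contDiff_d0 hV).mul (contDiff_d0 hV)).add
    (ContDiff.sum fun k _ => (contDiff_dk hV k).mul (contDiff_dk hV k))).add
      (hV.mul hV)).div_const 2

/-- The pointwise algebra behind the energy estimate: with `a, p, u` standing for
`∂₀V, ∇V, V`, with `w, w₀, q` for `W, ∂₀W, ∇W` and `s` for the energy density, the left-hand side is
the divergence of the weighted energy current once the second derivatives of `V` have been
eliminated by the Klein–Gordon equation. -/
lemma divergence_bound (r a u w w0 s : ℝ) (p q : Fin m → ℝ) (hw : 0 ≤ w)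
    (h0 : w0 + (|1 - r| + 1) * w ≤ 0)
    (hq : ∑ k, q k * q k ≤ (w0 + (|1 - r| + 1) * w) ^ 2)
    (hs : s = (a * a + (∑ k, p k * p k) + u * u) / 2) :
    w0 * s - a * (∑ k, q k * p k) + w * ((1 - r) * (a * u)) ≤ -(w * s) := by
  set ρ := -(w0 + (|1 - r| + 1) * w) with hρ
  have hρ0 : 0 ≤ ρ := by linarith
  have hP : 0 ≤ ∑ k, p k * p k := Finset.sum_nonneg fun _ _ => mul_self_nonneg _
  have hcs : (∑ k, q k * p k) ^ 2 ≤ ρ ^ 2 * ∑ k, p k * p k := by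
    have h := Finset.sum_mul_sq_le_sq_mul_sq Finset.univ q p
    simp only [pow_two (q _), pow_two (p _)] at h
    refine h.trans (mul_le_mul_of_nonneg_right ?_ hP)
    rw [hρ, neg_sq]; exact hq
  have h1 : -(a * ∑ k, q k * p k) ≤ ρ * s := by
    set P := ∑ k, p k * p k
    set Q := ∑ k, q k * p k
    have hb : |Q| ≤ ρ * √P := by
      refine abs_le_of_sq_le_sq ?_ (by positivity)
      rw [mul_pow, Real.sq_sqrt hP]; exact hcs
    have h2 : -(a * Q) ≤ |a| * |Q| := by rw [← abs_mul]; exact neg_le_abs _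
    have h3 : |a| * |Q| ≤ |a| * (ρ * √P) := mul_le_mul_of_nonneg_left hb (abs_nonneg _)
    have h4 : |a| * √P ≤ s := by
      have := sq_nonneg (|a| - √P)
      have e1 := Real.sq_sqrt hP
      have e2 := sq_abs a
      nlinarith [mul_self_nonneg u]
    nlinarith [mul_le_mul_of_nonneg_left h4 hρ0]
  have h2 : (1 - r) * (a * u) ≤ |1 - r| * s := by
    have h3 : (1 - r) * (a * u) ≤ |1 - r| * |a * u| := by rw [← abs_mul]; exact le_abs_self _
    refine h3.trans (mul_le_mul_of_nonneg_left ?_ (abs_nonneg _))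
    rw [abs_le]
    constructor <;> nlinarith [sq_nonneg (a - u), sq_nonneg (a + u)]
  have h3 := mul_le_mul_of_nonneg_left h2 hw
  have h4 : w0 = -ρ - (|1 - r| + 1) * w := by rw [hρ]; ring
  rw [h4]
  nlinarith

/-- Weighted energy estimate. If the nonnegative weight `W` decreases in time at least at rate
`|1 - r| + 1` plus the size of its spatial gradient, and if `W` kills `KG r V`, then the
integrated divergence of the energy current, which vanishes by compact support,
is at most `-∫ W · energy`. Hence `V` vanishes where `W` does not. -/
lemma weight_mul_eq_zero (r : ℝ) {V W : ℝ × (Fin m → ℝ) → ℝ} (hV : ContDiff ℝ (⊤ : ℕ∞) V)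
    (hW : ContDiff ℝ (⊤ : ℕ∞) W) (hW0 : ∀ z, 0 ≤ W z)
    (hWt : ∀ z, d0 W z + (|1 - r| + 1) * W z ≤ 0)
    (hWk : ∀ z, ∑ k, dk k W z * dk k W z ≤ (d0 W z + (|1 - r| + 1) * W z) ^ 2)
    (hF : ∀ z, W z * KG r V z = 0)
    {K : Set (ℝ × (Fin m → ℝ))} (hK : IsCompact K) (hVK : ∀ z ∈ tsupport V, W z ≠ 0 → z ∈ K)
    (z : ℝ × (Fin m → ℝ)) : W z * V z = 0 := by
  have hd0 := contDiff_d0 hV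
  have hdk := contDiff_dk hV
  have hone : (1 : WithTop ℕ∞) ≤ ((⊤ : ℕ∞) : WithTop ℕ∞) := by exact_mod_cast le_top
  have hout : ∀ y ∉ K, W y = 0 ∨ (V y = 0 ∧ fderiv ℝ V y = 0) := by
    intro y hy
    by_cases h : W y = 0
    · exact Or.inl h
    · have hy' : y ∉ tsupport V := fun h' => hy (hVK y h' h)
      exact Or.inr ⟨image_eq_zero_of_notMem_tsupport hy',
        image_eq_zero_of_notMem_tsupport fun h' => hy' (tsupport_fderiv_subset ℝ h')⟩
  -- the components `W · energy` and `W ∂₀V ∂ₖV` of the energy current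
  have hP0 : ContDiff ℝ (⊤ : ℕ∞) (fun y => W y * energy V y) := hW.mul (contDiff_energy hV)
  have hPk : ∀ k, ContDiff ℝ (⊤ : ℕ∞) (fun y => W y * (d0 V y * dk k V y)) :=
    fun k => hW.mul (hd0.mul (hdk k))
  have hc0 : HasCompactSupport (fun y => W y * energy V y) := by
    refine HasCompactSupport.intro hK fun y hy => ?_
    rcases hout y hy with h | ⟨h, h'⟩
    · simp [h]
    · simp [energy, d0, dk, h, h']
  have hck : ∀ k, HasCompactSupport (fun y => W y * (d0 V y * dk k V y)) := by
    refine fun k => HasCompactSupport.intro hK fun y hy => ?_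
    rcases hout y hy with h | ⟨h, h'⟩
    · simp [h]
    · simp [d0, h']
  have hmul : ∀ {f g : ℝ × (Fin m → ℝ) → ℝ} (_ : ContDiff ℝ (⊤ : ℕ∞) f)
      (_ : ContDiff ℝ (⊤ : ℕ∞) g) (v y : ℝ × (Fin m → ℝ)),
      fderiv ℝ (fun y => f y * g y) y v = f y * fderiv ℝ g y v + fderiv ℝ f y v * g y := by
    intro f g hf hg v y
    rw [fderiv_fun_mul (hf.differentiable (by simp) y) (hg.differentiable (by simp) y)]
    simp [mul_comm]
  have he0 : ∀ y, d0 (energy V) y =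
      d0 V y * d0 (d0 V) y + (∑ k, dk k V y * dk k (d0 V) y) + V y * d0 V y := by
    intro y
    have hsum : ContDiff ℝ (⊤ : ℕ∞) (fun y => ∑ k, dk k V y * dk k V y) :=
      ContDiff.sum fun k _ => (hdk k).mul (hdk k)
    have hA : HasFDerivAt (energy V) ((2 : ℝ)⁻¹ •
        ((fderiv ℝ (fun y => d0 V y * d0 V y) y + ∑ k, fderiv ℝ (fun y => dk k V y * dk k V y) y)
          + fderiv ℝ (fun y => V y * V y) y)) y := by
      have h1 := ((hd0.mul hd0).differentiable (by simp) y).hasFDerivAt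
      have h2 := HasFDerivAt.fun_sum (u := Finset.univ) fun (k : Fin m) _ =>
        (((hdk k).mul (hdk k)).differentiable (by simp) y).hasFDerivAt
      have h3 := ((hV.mul hV).differentiable (by simp) y).hasFDerivAt
      have h4 := ((h1.add h2).add h3).const_mul ((2 : ℝ)⁻¹)
      refine h4.congr_of_eventuallyEq (Filter.Eventually.of_forall fun x => ?_)
      simp only [energy, Pi.add_apply]
      ring
    have hk : ∀ k, fderiv ℝ (fun y => dk k V y * dk k V y) y (1, 0)
        = 2 * (dk k V y * dk k (d0 V) y) := by
      intro k
      rw [hmul (hdk k) (hdk k), dk_d0_comm hV]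
      change dk k V y * d0 (dk k V) y + d0 (dk k V) y * dk k V y = _
      ring
    unfold d0 at *
    rw [hA.fderiv]
    simp only [smul_apply, add_apply,
      sum_apply, hk, hmul hd0 hd0, hmul hV hV, smul_eq_mul, ← Finset.mul_sum]
    ring
  set I : ℝ × (Fin m → ℝ) → ℝ := fun y => d0 (fun y => W y * energy V y) y -
    ∑ k, dk k (fun y => W y * (d0 V y * dk k V y)) y with hI
  have hi0 := integral_fderiv_dir_eq_zero (hP0.of_le hone) hc0 (1, 0)
  have hik := fun k => integral_fderiv_dir_eq_zero ((hPk k).of_le hone) (hck k)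
    (0, Pi.single k 1)
  have hIint : Integrable I := hi0.1.sub (integrable_finsetSum _ fun k _ => (hik k).1)
  have hI0 : ∫ y, I y = 0 := by
    have h1 : ∫ y, I y = (∫ y, d0 (fun y => W y * energy V y) y) -
        ∫ y, ∑ k, dk k (fun y => W y * (d0 V y * dk k V y)) y :=
      integral_sub hi0.1 (integrable_finsetSum _ fun k _ => (hik k).1)
    have h2 : ∫ y, ∑ k, dk k (fun y => W y * (d0 V y * dk k V y)) y =
        ∑ k, ∫ y, dk k (fun y => W y * (d0 V y * dk k V y)) y :=
      integral_finsetSum _ fun k _ => (hik k).1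
    rw [h1, h2]
    simp only [d0, dk] at hi0 hik ⊢
    simp only [hi0.2, fun k => (hik k).2]
    simp
  have hIle : ∀ y, I y ≤ -(W y * energy V y) := by
    intro y
    have e0 : d0 (fun y => W y * energy V y) y = W y * d0 (energy V) y + d0 W y * energy V y :=
      hmul hW (contDiff_energy hV) _ _
    have ek : ∀ k, dk k (fun y => W y * (d0 V y * dk k V y)) y =
        W y * (d0 V y * dk k (dk k V) y) + W y * (dk k V y * dk k (d0 V) y)
          + d0 V y * (dk k W y * dk k V y) := by
      intro k
      have h1 : dk k (fun y => W y * (d0 V y * dk k V y)) y =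
          W y * dk k (fun y => d0 V y * dk k V y) y + dk k W y * (d0 V y * dk k V y) :=
        hmul hW (hd0.mul (hdk k)) _ _
      have h2 : dk k (fun y => d0 V y * dk k V y) y =
          d0 V y * dk k (dk k V) y + dk k (d0 V) y * dk k V y := hmul hd0 (hdk k) _ _
      rw [h1, h2]; ring
    have hb := divergence_bound r (d0 V y) (V y) (W y) (d0 W y) (energy V y)
      (fun k => dk k V y) (fun k => dk k W y) (hW0 y) (hWt y) (hWk y) rfl
    refine le_of_eq_of_le ?_ hb
    have hFy := hF y
    simp only [KG] at hFy
    simp only [hI, e0, ek, he0, Finset.sum_add_distrib, ← Finset.mul_sum]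
    linear_combination d0 V y * hFy
  have hWe : W z * energy V z = 0 := by
    by_contra hne
    have hpos := hP0.continuous.integral_pos_of_hasCompactSupport_nonneg_nonzero (μ := volume) hc0
      (fun y => mul_nonneg (hW0 y) (energy_nonneg V y)) hne
    have hle : ∫ y, I y ≤ ∫ y, -(W y * energy V y) :=
      integral_mono hIint (hP0.continuous.integrable_of_hasCompactSupport hc0).neg hIle
    rw [hI0, integral_neg] at hle
    linarith
  rcases mul_eq_zero.mp hWe with h | h
  · simp [h]
  · have h1 := sum_dk_sq_nonneg V z
    have h2 : V z * V z = 0 := by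
      unfold energy at h
      nlinarith [mul_self_nonneg (d0 V z), mul_self_nonneg (V z)]
    simp [mul_self_eq_zero.mp h2]

/-! ### Weights supported in a past light cone -/

/-- The smoothed distance `√(ε² + |x - x₀|²)` from the spatial point `x₀`. -/
def softDist (ε : ℝ) (x₀ : Fin m → ℝ) (z : ℝ × (Fin m → ℝ)) : ℝ :=
  √(ε ^ 2 + ∑ k, (z.2 k - x₀ k) ^ 2)

/-- The weight `e^{-λt} ψ(T - t - √(ε² + |x - x₀|²))`, where `ψ` is the smooth monotone function
`expNegInvGlue`, positive exactly on `(0, ∞)`. It is supported in the past cone of `(T, x₀)`. -/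
def coneWeight (lam T ε : ℝ) (x₀ : Fin m → ℝ) (z : ℝ × (Fin m → ℝ)) : ℝ :=
  Real.exp (-(lam * z.1)) * expNegInvGlue (T - z.1 - softDist ε x₀ z)

variable {lam T ε : ℝ} {x₀ : Fin m → ℝ}

lemma softDist_arg_pos (hε : 0 < ε) (z : ℝ × (Fin m → ℝ)) :
    0 < ε ^ 2 + ∑ k, (z.2 k - x₀ k) ^ 2 :=
  add_pos_of_pos_of_nonneg (by positivity) (Finset.sum_nonneg fun _ _ => sq_nonneg _)

lemma contDiff_coneWeight (hε : 0 < ε) :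
    ContDiff ℝ (⊤ : ℕ∞) (coneWeight lam T ε x₀) := by
  have h1 : ContDiff ℝ (⊤ : ℕ∞) (softDist ε x₀) := by
    refine ContDiff.sqrt ?_ fun z => (softDist_arg_pos hε z).ne'
    refine contDiff_const.add (ContDiff.sum fun k _ => ContDiff.pow (ContDiff.sub ?_ contDiff_const) 2)
    exact (contDiff_apply ℝ ℝ k).comp contDiff_snd
  exact (contDiff_const.mul contDiff_fst).neg.exp.mul
    (expNegInvGlue.contDiff.comp ((contDiff_const.sub contDiff_fst).sub h1))

lemma fderiv_coneWeight (hε : 0 < ε) (z v : ℝ × (Fin m → ℝ)) :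
    fderiv ℝ (coneWeight lam T ε x₀) z v = -lam * v.1 * coneWeight lam T ε x₀ z -
      Real.exp (-(lam * z.1)) * deriv expNegInvGlue (T - z.1 - softDist ε x₀ z) *
        (v.1 + (∑ k, (z.2 k - x₀ k) * v.2 k) / softDist ε x₀ z) := by
  have hd : DifferentiableAt ℝ (coneWeight lam T ε x₀) z :=
    (contDiff_coneWeight hε).differentiable (by simp) z
  rw [← hd.lineDeriv_eq_fderiv]
  refine HasLineDerivAt.lineDeriv ?_
  have ht : HasDerivAt (fun t : ℝ => (z + t • v).1) v.1 0 := by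
    have := ((hasDerivAt_id (0 : ℝ)).mul_const v.1).const_add z.1
    simpa using this
  have hk : ∀ k, HasDerivAt (fun t : ℝ => ((z + t • v).2 k - x₀ k) ^ 2)
      (2 * ((z.2 k - x₀ k) * v.2 k)) 0 := by
    intro k
    have := ((((hasDerivAt_id (0 : ℝ)).mul_const (v.2 k)).const_add (z.2 k)).sub_const (x₀ k)).pow 2
    exact this.congr_deriv (by simp; ring)
  have hq : HasDerivAt (fun t : ℝ => softDist ε x₀ (z + t • v))
      ((∑ k, (z.2 k - x₀ k) * v.2 k) / softDist ε x₀ z) 0 := by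
    have h1 := (HasDerivAt.fun_sum (u := Finset.univ) fun k _ => hk k).const_add (ε ^ 2)
    have h2 := h1.sqrt (by simpa using (softDist_arg_pos (x₀ := x₀) hε z).ne')
    refine h2.congr_deriv ?_
    rw [← Finset.mul_sum, mul_div_mul_left _ _ (two_ne_zero' ℝ), zero_smul, add_zero, softDist]
  have hψ : ∀ y, HasDerivAt expNegInvGlue (deriv expNegInvGlue y) y := fun y =>
    ((expNegInvGlue.contDiff (n := ⊤)).differentiable (by simp) y).hasDerivAt
  have hs := (ht.const_sub T).sub hq
  have hψs := (hψ ((T - (z + (0 : ℝ) • v).1) - softDist ε x₀ (z + (0 : ℝ) • v))).comp (0 : ℝ) hs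
  have he := (ht.const_mul lam).neg.exp
  have hall := he.mul hψs
  refine HasDerivAt.congr_deriv hall ?_
  simp only [zero_smul, add_zero, coneWeight, Function.comp, Pi.sub_apply, Pi.neg_apply]
  ring

lemma d0_coneWeight (hε : 0 < ε) (z : ℝ × (Fin m → ℝ)) :
    d0 (coneWeight lam T ε x₀) z + lam * coneWeight lam T ε x₀ z =
      -(Real.exp (-(lam * z.1)) * deriv expNegInvGlue (T - z.1 - softDist ε x₀ z)) := by
  rw [d0, fderiv_coneWeight hε]
  simp
  ring

lemma dk_coneWeight (hε : 0 < ε) (k : Fin m) (z : ℝ × (Fin m → ℝ)) :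
    dk k (coneWeight lam T ε x₀) z =
      -(Real.exp (-(lam * z.1)) * deriv expNegInvGlue (T - z.1 - softDist ε x₀ z)) *
        ((z.2 k - x₀ k) / softDist ε x₀ z) := by
  rw [dk, fderiv_coneWeight hε]
  simp [Pi.single_apply]

/-- The gradient of `softDist` has length at most one, so the weight propagates
no faster than light. -/
lemma sum_dk_coneWeight_le (hε : 0 < ε) (z : ℝ × (Fin m → ℝ)) :
    ∑ k, dk k (coneWeight lam T ε x₀) z * dk k (coneWeight lam T ε x₀) z ≤
      (d0 (coneWeight lam T ε x₀) z + lam * coneWeight lam T ε x₀ z) ^ 2 := by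
  have hpos := softDist_arg_pos (x₀ := x₀) hε z
  have hsq : softDist ε x₀ z ^ 2 = ε ^ 2 + ∑ k, (z.2 k - x₀ k) ^ 2 := Real.sq_sqrt hpos.le
  simp only [dk_coneWeight hε, d0_coneWeight hε]
  set c := -(Real.exp (-(lam * z.1)) * deriv expNegInvGlue (T - z.1 - softDist ε x₀ z))
  have h1 : ∀ k, c * ((z.2 k - x₀ k) / softDist ε x₀ z) * (c * ((z.2 k - x₀ k) / softDist ε x₀ z))
      = c ^ 2 * ((z.2 k - x₀ k) ^ 2 / (ε ^ 2 + ∑ k, (z.2 k - x₀ k) ^ 2)) := by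
    intro k
    rw [← hsq]; ring
  simp only [h1, ← Finset.mul_sum, ← Finset.sum_div]
  refine mul_le_of_le_one_right (sq_nonneg _) ?_
  rw [div_le_one hpos]
  nlinarith [sq_nonneg ε]

/-! ### Finite propagation speed -/

lemma isClosed_Jplus {K : Set (ℝ × (Fin m → ℝ))} (hK : IsCompact K) : IsClosed (Jplus K) := by
  set C : Set (ℝ × (Fin m → ℝ)) := {z | mink z z ≤ 0 ∧ 0 ≤ z.1} with hC
  have hCc : IsClosed C := by
    have hm : Continuous fun z : ℝ × (Fin m → ℝ) => mink z z := by
      unfold mink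
      fun_prop
    exact (isClosed_le hm continuous_const).inter (isClosed_le continuous_const continuous_fst)
  have : Jplus K = (fun p : (ℝ × (Fin m → ℝ)) × (ℝ × (Fin m → ℝ)) => p.1 + p.2) '' (K ×ˢ C) := by
    ext z
    constructor
    · rintro ⟨w, hw, h1, h2⟩
      exact ⟨(w, z - w), ⟨hw, h1, h2⟩, by simp⟩
    · rintro ⟨⟨w, c⟩, ⟨hw, h1, h2⟩, rfl⟩
      exact ⟨w, hw, by simpa using h1, by simpa using h2⟩
  rw [this, Set.add_image_prod]
  exact hCc.add_left_of_isCompact hK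

/-- A spatially compact function vanishing in the past is supported in the causal future of its
source: at a point outside that future, a slightly larger past cone still misses the source, and
the energy estimate applies with a weight supported in that cone. -/
lemma tsupport_subset_Jplus (r a : ℝ) {V : ℝ × (Fin m → ℝ) → ℝ} (hV : ContDiff ℝ (⊤ : ℕ∞) V)
    (hVc : SpatCompact V) (hVa : ∀ z, z.1 < a → V z = 0) (hF : HasCompactSupport (KG r V)) :
    tsupport V ⊆ Jplus (tsupport (KG r V)) := by
  have hcl := isClosed_Jplus hF.isCompact
  refine closure_minimal (fun z hz => ?_) hcl
  by_contra hzJ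
  apply hz
  -- the apex of the larger cone lies at time `z.1 + 2 * ε`
  obtain ⟨ε, hε, hεJ⟩ : ∃ ε > 0, (z.1 + 2 * ε, z.2) ∉ Jplus (tsupport (KG r V)) := by
    have hc : Filter.Tendsto (fun ε : ℝ => (z.1 + 2 * ε, z.2)) (nhdsWithin 0 (Ioi 0)) (nhds z) := by
      have : Continuous (fun ε : ℝ => (z.1 + 2 * ε, z.2)) := by fun_prop
      have h := this.tendsto 0
      simp only [mul_zero, add_zero] at h
      exact h.mono_left nhdsWithin_le_nhds
    have h := (hc.eventually (hcl.isOpen_compl.mem_nhds hzJ)).and self_mem_nhdsWithin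
    obtain ⟨ε, h1, h2⟩ := h.exists
    exact ⟨ε, h2, h1⟩
  set T := z.1 + 2 * ε with hT
  set lam := |1 - r| + 1 with hlam
  have hW0 : ∀ y, 0 ≤ coneWeight lam T ε z.2 y := fun y =>
    mul_nonneg (Real.exp_pos _).le (expNegInvGlue.nonneg _)
  have hWne : ∀ y, coneWeight lam T ε z.2 y ≠ 0 → softDist ε z.2 y < T - y.1 := by
    intro y hy
    by_contra hle
    apply hy
    rw [coneWeight, expNegInvGlue.zero_of_nonpos (by linarith), mul_zero]
  have hsoft0 : ∀ y, 0 ≤ softDist ε z.2 y := fun y => Real.sqrt_nonneg _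
  have hts : ∀ y ∈ tsupport V, a ≤ y.1 := by
    intro y hy
    have : tsupport V ⊆ {y | a ≤ y.1} := closure_minimal
      (fun y hy => not_lt.mp fun h => hy (hVa y h)) (isClosed_le continuous_const continuous_fst)
    exact this hy
  have key := weight_mul_eq_zero r hV (contDiff_coneWeight (lam := lam) (T := T) (x₀ := z.2) hε) hW0
    (fun y => by
      rw [d0_coneWeight hε]
      exact neg_nonpos.mpr (mul_nonneg (Real.exp_pos _).le expNegInvGlue.monotone.deriv_nonneg))
    (sum_dk_coneWeight_le hε)
    (fun y => by
      by_contra hne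
      obtain ⟨hw, hk⟩ := mul_ne_zero_iff.mp hne
      have hlt := hWne y hw
      refine hεJ ⟨y, subset_tsupport _ hk, ?_, ?_⟩
      · have h1 : softDist ε z.2 y ^ 2 = ε ^ 2 + ∑ k, (y.2 k - z.2 k) ^ 2 :=
          Real.sq_sqrt (softDist_arg_pos hε y).le
        have h2 : softDist ε z.2 y ^ 2 < (T - y.1) ^ 2 := pow_lt_pow_left₀ hlt (hsoft0 y) two_ne_zero
        have h3 : ∑ k, (z.2 k - y.2 k) * (z.2 k - y.2 k) = ∑ k, (y.2 k - z.2 k) ^ 2 :=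
          Finset.sum_congr rfl fun k _ => by ring
        simp only [mink, Prod.fst_sub, Prod.snd_sub, Pi.sub_apply, h3]
        nlinarith [sq_nonneg ε]
      · have := hsoft0 y
        simp only
        linarith)
    (hVc (|a| + |T| + 1) (by positivity))
    (fun y hy hw => by
      refine ⟨hy, ⟨?_, ?_⟩, mem_univ _⟩
      · have := hts y hy
        linarith [neg_abs_le a, abs_nonneg T]
      · have := hWne y hw
        linarith [hsoft0 y, le_abs_self T, abs_nonneg a])
    z
  refine (mul_eq_zero.mp key).resolve_left ?_
  have hsz : softDist ε z.2 z = ε := by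
    simp [softDist, Real.sqrt_sq hε.le]
  refine (mul_pos (Real.exp_pos _) (expNegInvGlue.pos_of_pos ?_)).ne'
  rw [hsz, hT]
  linarith

/-! ### Time reversal -/

/-- Time reversal `(t, x) ↦ (-t, x)`. -/
def timeRev : (ℝ × (Fin m → ℝ)) ≃L[ℝ] (ℝ × (Fin m → ℝ)) :=
  (ContinuousLinearEquiv.neg ℝ).prodCongr (ContinuousLinearEquiv.refl ℝ (Fin m → ℝ))

@[simp] lemma timeRev_apply (z : ℝ × (Fin m → ℝ)) : timeRev z = (-z.1, z.2) := rfl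

lemma KG_comp_timeRev (r : ℝ) (V : ℝ × (Fin m → ℝ) → ℝ) :
    KG r (V ∘ timeRev) = KG r V ∘ timeRev := by
  have h0 : ∀ f : ℝ × (Fin m → ℝ) → ℝ, d0 (f ∘ timeRev) = fun y => -(d0 f ∘ timeRev) y := by
    intro f
    funext y
    simp only [d0, timeRev.comp_right_fderiv, ContinuousLinearMap.comp_apply, Function.comp]
    have : ((timeRev : (ℝ × (Fin m → ℝ)) ≃L[ℝ] _) : (ℝ × (Fin m → ℝ)) →L[ℝ] _) (1, 0)
        = -((1, 0) : ℝ × (Fin m → ℝ)) := by simp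
    rw [this, map_neg]
  have hk : ∀ (k : Fin m) (f : ℝ × (Fin m → ℝ) → ℝ), dk k (f ∘ timeRev) = dk k f ∘ timeRev := by
    intro k f
    funext y
    simp only [dk, timeRev.comp_right_fderiv, ContinuousLinearMap.comp_apply, Function.comp]
    simp
  have h00 : d0 (d0 (V ∘ timeRev)) = d0 (d0 V) ∘ timeRev := by
    have : d0 (fun y => -(d0 V ∘ timeRev) y) = fun y => -d0 (d0 V ∘ timeRev) y := by
      funext y
      change fderiv ℝ (fun y => -(d0 V ∘ timeRev) y) y (1, 0) =
        -(fderiv ℝ (d0 V ∘ timeRev) y (1, 0))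
      rw [fderiv_fun_neg]
      rfl
    rw [h0, this, h0]
    funext y
    simp
  funext z
  simp only [KG, h00, hk, Function.comp]

/-- The time reversal of `tsupport_subset_Jplus`. -/
lemma tsupport_subset_Jminus (r a : ℝ) {V : ℝ × (Fin m → ℝ) → ℝ} (hV : ContDiff ℝ (⊤ : ℕ∞) V)
    (hVc : SpatCompact V) (hVa : ∀ z, a < z.1 → V z = 0) (hF : HasCompactSupport (KG r V)) :
    tsupport V ⊆ Jminus (tsupport (KG r V)) := by
  have hts : ∀ f : ℝ × (Fin m → ℝ) → ℝ, tsupport (f ∘ timeRev) = timeRev ⁻¹' tsupport f :=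
    fun f => tsupport_comp_eq_preimage f timeRev.toHomeomorph
  have h := tsupport_subset_Jplus r (-a) (V := V ∘ timeRev) (hV.comp timeRev.contDiff)
    (fun S hS => by
      have hc := timeRev.toHomeomorph.isCompact_preimage.mpr (hVc S hS)
      rw [hts]
      convert hc using 1
      ext z
      simp only [mem_inter_iff, mem_preimage, mem_prod, mem_Icc, mem_univ, and_true,
        ContinuousLinearEquiv.coe_toHomeomorph, timeRev_apply]
      constructor <;> rintro ⟨h1, h2, h3⟩ <;> exact ⟨h1, by linarith, by linarith⟩)
    (fun z hz => hVa _ (by simp only [timeRev_apply]; linarith))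
    (by rw [KG_comp_timeRev]; exact hF.comp_homeomorph timeRev.toHomeomorph)
  intro z hz
  have hz' : timeRev z ∈ tsupport (V ∘ timeRev) := by
    rw [hts]; simpa using hz
  obtain ⟨w, hw, h1, h2⟩ := h hz'
  rw [KG_comp_timeRev, hts] at hw
  refine ⟨timeRev w, hw, ?_, ?_⟩
  · refine le_of_eq_of_le ?_ h1
    simp [mink]
    ring
  · simp at h2 ⊢
    linarith

end Aux

/-- every smooth, spatially compactly supported solution `U` of the
homogeneous Klein–Gordon equation is of the form `U = EF = E⁺F − E⁻F` for some
`F ∈ C_c^∞(ℝ^d)`. -/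
theorem regular_solution_is_EF (d : ℕ) (hd : 2 ≤ d) (r : ℝ)
    (U : ℝ × (Fin (d-1) → ℝ) → ℝ)
    (hU : ContDiff ℝ (⊤ : ℕ∞) U) (heqU : ∀ z, KG r U z = 0) (hUc : SpatCompact U) :
    ∃ F Gp Gm : ℝ × (Fin (d-1) → ℝ) → ℝ,
      ContDiff ℝ (⊤ : ℕ∞) F ∧ HasCompactSupport F ∧
      (ContDiff ℝ (⊤ : ℕ∞) Gp ∧ (∀ z, KG r Gp z = F z) ∧ tsupport Gp ⊆ Jplus (tsupport F)) ∧
      (ContDiff ℝ (⊤ : ℕ∞) Gm ∧ (∀ z, KG r Gm z = F z) ∧ tsupport Gm ⊆ Jminus (tsupport F)) ∧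
      ∀ z, U z = Gp z - Gm z := by
  have hχ : ContDiff ℝ (⊤ : ℕ∞) (fun z : ℝ × (Fin (d-1) → ℝ) => Real.smoothTransition z.1) :=
    Real.smoothTransition.contDiff.comp contDiff_fst
  set Gp : ℝ × (Fin (d-1) → ℝ) → ℝ := fun z => Real.smoothTransition z.1 * U z with hGp
  set Gm : ℝ × (Fin (d-1) → ℝ) → ℝ := fun z => Gp z - U z with hGm
  have hp : ContDiff ℝ (⊤ : ℕ∞) Gp := hχ.mul hU
  have hm : ContDiff ℝ (⊤ : ℕ∞) Gm := hp.sub hU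
  have hKm : KG r Gm = KG r Gp := by
    funext z
    rw [hGm, KG_sub r hp hU, heqU, sub_zero]
  have hsc : ∀ G : ℝ × (Fin (d-1) → ℝ) → ℝ, (∀ z, U z = 0 → G z = 0) → SpatCompact G := by
    intro G hG S hS
    have hsub : tsupport G ⊆ tsupport U := closure_mono fun z hz h => hz (hG z h)
    rw [← inter_eq_self_of_subset_right hsub, inter_right_comm]
    exact (hUc S hS).inter_right (isClosed_tsupport G)
  have hF : HasCompactSupport (KG r Gp) := by
    refine HasCompactSupport.intro (hUc 1 one_pos) fun z hz => ?_
    -- off the slab `0 ≤ t ≤ 1` the cutoff is locally constant, so `Gp` is locally `0` or `U`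
    by_cases hzU : z ∈ tsupport U
    · have hz1 : z.1 < 0 ∨ 1 < z.1 := by
        by_contra hcon
        push Not at hcon
        exact hz ⟨hzU, ⟨by linarith, hcon.2⟩, mem_univ _⟩
      rcases hz1 with h | h
      · rw [KG_congr r (g := fun _ => 0), KG_zero]
        filter_upwards [(isOpen_Iio.preimage continuous_fst).mem_nhds (mem_preimage.mpr h)] with y hy
        simp [hGp, Real.smoothTransition.zero_of_nonpos (mem_Iio.mp hy).le]
      · rw [KG_congr r (g := U), heqU]
        filter_upwards [(isOpen_Ioi.preimage continuous_fst).mem_nhds (mem_preimage.mpr h)] with y hy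
        simp [hGp, Real.smoothTransition.one_of_one_le (mem_Ioi.mp hy).le]
    · rw [KG_congr r (g := fun _ => 0), KG_zero]
      filter_upwards [(isClosed_tsupport U).isOpen_compl.mem_nhds hzU] with y hy
      simp [hGp, image_eq_zero_of_notMem_tsupport hy]
  refine ⟨KG r Gp, Gp, Gm, contDiff_KG r hp, hF, ⟨hp, fun _ => rfl, ?_⟩,
    ⟨hm, fun z => congrFun hKm z, ?_⟩, fun z => by simp [hGm]⟩
  · refine tsupport_subset_Jplus r 0 hp (hsc Gp fun z hz => by simp [hGp, hz]) (fun z hz => ?_) hF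
    simp [hGp, Real.smoothTransition.zero_of_nonpos hz.le]
  · rw [← hKm] at hF ⊢
    refine tsupport_subset_Jminus r 1 hm (hsc Gm fun z hz => by simp [hGm, hGp, hz])
      (fun z hz => ?_) hF
    simp [hGm, hGp, Real.smoothTransition.one_of_one_le hz.le]
end
end

section
/- Let d ≥ 2 and r ∈ ℝ, and let F, G ∈ C_c^∞(ℝ^d, ℝ). Then for every t ∈ ℝ, σ_t(EF, EG) = −∫_{ℝ^d} F(x) (EG)(x) dx, where EF = E^+F − E^−F and EG = E^+G − E^−G are the propagator solutions and σ_t(U,V) = ∫_{ℝ^{d−1}} ( U ∂₀V − ∂₀U V )(t,x⃗) dx⃗. -/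
/-!
Write `V = EG`, a solution of the homogeneous equation. If `U` solves `KG U = F` and has bounded
time slices, then the current `U ∂₀V − ∂₀U V` has time derivative `U ΔV − ΔU V − F V`, and Green's
identity on a time slice leaves `d/ds σ_s(U, V) = −∫ F V (s, ·)` (`hasDerivAt_sigmaT`). Both `E⁺F`
and `E⁻F` are such `U`, since light cones over a compact set have bounded time slices
(`locSpatBdd_of_causal`). As `E⁺F` vanishes in the far past, integrating over `(-∞, t]` gives
`σ_t(E⁺F, V)`; as `E⁻F` vanishes in the far future, integrating over `(t, ∞)` gives
`−σ_t(E⁻F, V)`. The sum is `σ_t(EF, EG)`, and by Fubini it equals `−∫ F V`.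
-/

open Real Set MeasureTheory

noncomputable section

/-! ### Functions with bounded time slices -/

/-- `U` vanishes outside a bounded set of positions, locally uniformly in time. -/
def LocSpatBdd {m : ℕ} (U : ℝ × (Fin m → ℝ) → ℝ) : Prop :=
  ∀ T : ℝ, ∃ R : ℝ, ∀ (t : ℝ) (x : Fin m → ℝ), |t| ≤ T → R < ‖x‖ → U (t, x) = 0

lemma LocSpatBdd.fderiv_apply {m : ℕ} {U : ℝ × (Fin m → ℝ) → ℝ} (hU : LocSpatBdd U)
    (v : ℝ × (Fin m → ℝ)) : LocSpatBdd (fun z => fderiv ℝ U z v) := by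
  intro T
  -- enlarging the time window makes the vanishing region a neighbourhood of `(t, x)`
  obtain ⟨R, hR⟩ := hU (T + 1)
  refine ⟨R, fun t x ht hx => ?_⟩
  have hopen : IsOpen {z : ℝ × (Fin m → ℝ) | |z.1| < T + 1 ∧ R < ‖z.2‖} :=
    (isOpen_lt (f := fun z : ℝ × (Fin m → ℝ) => |z.1|) (by fun_prop) continuous_const).inter
      (isOpen_lt (g := fun z : ℝ × (Fin m → ℝ) => ‖z.2‖) continuous_const (by fun_prop))
  have hev : U =ᶠ[nhds (t, x)] fun _ => (0 : ℝ) := by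
    filter_upwards [hopen.mem_nhds (show (t, x) ∈ _ from ⟨by simp only; linarith, hx⟩)] with z hz
    exact hR z.1 z.2 hz.1.le hz.2
  simp [hev.fderiv_eq]

lemma LocSpatBdd.mul_right {m : ℕ} {U : ℝ × (Fin m → ℝ) → ℝ} (hU : LocSpatBdd U)
    (V : ℝ × (Fin m → ℝ) → ℝ) : LocSpatBdd (fun z => U z * V z) := by
  intro T
  obtain ⟨R, hR⟩ := hU T
  exact ⟨R, fun t x ht hx => by simp [hR t x ht hx]⟩

lemma LocSpatBdd.sub {m : ℕ} {U V : ℝ × (Fin m → ℝ) → ℝ} (hU : LocSpatBdd U)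
    (hV : LocSpatBdd V) : LocSpatBdd (fun z => U z - V z) := by
  intro T
  obtain ⟨R, hR⟩ := hU T
  obtain ⟨R', hR'⟩ := hV T
  refine ⟨max R R', fun t x ht hx => ?_⟩
  simp [hR t x ht ((le_max_left _ _).trans_lt hx), hR' t x ht ((le_max_right _ _).trans_lt hx)]

/-- Restrictions of a continuous function to time slices are integrable. -/
lemma LocSpatBdd.integrable_slice {m : ℕ} {f : ℝ × (Fin m → ℝ) → ℝ} (hf : LocSpatBdd f)
    (hc : Continuous f) (t : ℝ) : Integrable (fun x => f (t, x)) := by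
  obtain ⟨R, hR⟩ := hf |t|
  refine Continuous.integrable_of_hasCompactSupport (by fun_prop) ?_
  refine HasCompactSupport.intro (isCompact_closedBall (0 : Fin m → ℝ) R) fun x hx => ?_
  exact hR t x le_rfl (by simpa using hx)

lemma contDiff_fderiv_apply {m : ℕ} {U : ℝ × (Fin m → ℝ) → ℝ}
    (hU : ContDiff ℝ (⊤ : ℕ∞) U) (v : ℝ × (Fin m → ℝ)) :
    ContDiff ℝ (⊤ : ℕ∞) (fun z => fderiv ℝ U z v) :=
  (hU.fderiv_right (by simp)).clm_apply contDiff_const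

/-! ### Calculus on time slices -/

/-- The time derivative may be taken under the spatial integral. -/
lemma LocSpatBdd.hasDerivAt_integral {m : ℕ} {f : ℝ × (Fin m → ℝ) → ℝ} (hf : LocSpatBdd f)
    (hc : ContDiff ℝ (⊤ : ℕ∞) f) (t : ℝ) :
    HasDerivAt (fun s => ∫ x : Fin m → ℝ, f (s, x)) (∫ x : Fin m → ℝ, d0 f (t, x)) t := by
  have hcd : Continuous (d0 f) := (contDiff_fderiv_apply hc _).continuous
  obtain ⟨R, hR⟩ := hf.fderiv_apply (1, 0) (|t| + 1)
  obtain ⟨C, hC⟩ := ((isCompact_closedBall t 1).prod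
    (isCompact_closedBall (0 : Fin m → ℝ) R)).exists_bound_of_continuousOn hcd.continuousOn
  refine (hasDerivAt_integral_of_dominated_loc_of_deriv_le
    (F := fun s x => f (s, x)) (F' := fun s x => d0 f (s, x))
    (bound := (Metric.closedBall (0 : Fin m → ℝ) R).indicator fun _ => C)
    (Metric.ball_mem_nhds t one_pos) ?_ (hf.integrable_slice hc.continuous t) ?_ ?_ ?_ ?_).2
  · exact Filter.Eventually.of_forall fun s =>
      (hf.integrable_slice hc.continuous s).aestronglyMeasurable
  · exact Continuous.aestronglyMeasurable (by fun_prop)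
  · refine Filter.Eventually.of_forall fun x s hs => ?_
    by_cases hx : x ∈ Metric.closedBall (0 : Fin m → ℝ) R
    · rw [indicator_of_mem hx]
      exact hC (s, x) ⟨Metric.ball_subset_closedBall hs, hx⟩
    · rw [indicator_of_notMem hx]
      have h1 : |s| ≤ |t| + 1 := by
        have h2 : |s - t| < 1 := by simpa [Real.dist_eq] using hs
        have h3 := abs_add_le (s - t) t
        rw [sub_add_cancel] at h3
        linarith
      have : d0 f (s, x) = 0 := hR s x h1 (by simpa using hx)
      simp [this]
  · exact (integrable_indicator_iff Metric.isClosed_closedBall.measurableSet).2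
      (integrableOn_const (isCompact_closedBall _ _).measure_lt_top.ne)
  · refine Filter.Eventually.of_forall fun x s _ => ?_
    have hd : HasFDerivAt f (fderiv ℝ f (s, x)) (s, x) :=
      (hc.differentiable (by simp) (s, x)).hasFDerivAt
    exact hd.comp_hasDerivAt s ((hasDerivAt_id s).prodMk (hasDerivAt_const s x))

/-- Spatial integration by parts on a time slice; only one factor needs bounded support. -/
lemma integral_slice_by_parts {m : ℕ} {U V : ℝ × (Fin m → ℝ) → ℝ}
    (hU : ContDiff ℝ (⊤ : ℕ∞) U) (hV : ContDiff ℝ (⊤ : ℕ∞) V) (hUs : LocSpatBdd U)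
    (t : ℝ) (k : Fin m) :
    ∫ x, U (t, x) * dk k V (t, x) = -∫ x, dk k U (t, x) * V (t, x) := by
  have hs : ∀ {W : ℝ × (Fin m → ℝ) → ℝ}, ContDiff ℝ (⊤ : ℕ∞) W → ∀ x : Fin m → ℝ,
      HasFDerivAt (fun y => W (t, y))
        ((fderiv ℝ W (t, x)).comp (ContinuousLinearMap.inr ℝ ℝ (Fin m → ℝ))) x := by
    intro W hW x
    exact ((hW.differentiable (by simp) (t, x)).hasFDerivAt).comp x (hasFDerivAt_prodMk_right t x)
  have e : ∀ {W : ℝ × (Fin m → ℝ) → ℝ}, ContDiff ℝ (⊤ : ℕ∞) W → ∀ x : Fin m → ℝ,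
      fderiv ℝ (fun y => W (t, y)) x (Pi.single k 1) = dk k W (t, x) := by
    intro W hW x
    rw [(hs hW x).fderiv]
    simp [dk]
  have cU : Continuous (dk k U) := (contDiff_fderiv_apply hU _).continuous
  have cV : Continuous (dk k V) := (contDiff_fderiv_apply hV _).continuous
  have hUs' : LocSpatBdd (dk k U) := hUs.fderiv_apply _
  have key := integral_mul_fderiv_eq_neg_fderiv_mul_of_integrable
    (μ := (volume : Measure (Fin m → ℝ))) (f := fun y => U (t, y)) (g := fun y => V (t, y))
    (v := Pi.single k 1)
    (by simp only [e hU]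
        exact (hUs'.mul_right V).integrable_slice (cU.mul hV.continuous) t)
    (by simp only [e hV]
        exact (hUs.mul_right _).integrable_slice (hU.continuous.mul cV) t)
    ((hUs.mul_right V).integrable_slice (hU.continuous.mul hV.continuous) t)
    (fun x _ => (hs hU x).differentiableAt) (fun x _ => (hs hV x).differentiableAt)
  simpa only [e hU, e hV] using key

/-- Green's identity for `∂ₖ²` on a time slice. -/
lemma integral_slice_green {m : ℕ} {U V : ℝ × (Fin m → ℝ) → ℝ}
    (hU : ContDiff ℝ (⊤ : ℕ∞) U) (hV : ContDiff ℝ (⊤ : ℕ∞) V) (hUs : LocSpatBdd U)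
    (t : ℝ) (k : Fin m) :
    ∫ x, (U (t, x) * dk k (dk k V) (t, x) - dk k (dk k U) (t, x) * V (t, x)) = 0 := by
  have dU : ContDiff ℝ (⊤ : ℕ∞) (dk k U) := contDiff_fderiv_apply hU _
  have dV : ContDiff ℝ (⊤ : ℕ∞) (dk k V) := contDiff_fderiv_apply hV _
  have ddU : ContDiff ℝ (⊤ : ℕ∞) (dk k (dk k U)) := contDiff_fderiv_apply dU _
  have ddV : ContDiff ℝ (⊤ : ℕ∞) (dk k (dk k V)) := contDiff_fderiv_apply dV _
  have hUs' : LocSpatBdd (dk k U) := hUs.fderiv_apply _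
  have hUs'' : LocSpatBdd (dk k (dk k U)) := hUs'.fderiv_apply _
  rw [integral_sub ((hUs.mul_right _).integrable_slice (hU.continuous.mul ddV.continuous) t)
      ((hUs''.mul_right _).integrable_slice (ddU.continuous.mul hV.continuous) t),
    integral_slice_by_parts hU dV hUs, integral_slice_by_parts dU hV hUs']
  ring

/-! ### Rate of change of the symplectic form -/

lemma d0_current {m : ℕ} {U V : ℝ × (Fin m → ℝ) → ℝ}
    (hU : ContDiff ℝ (⊤ : ℕ∞) U) (hV : ContDiff ℝ (⊤ : ℕ∞) V) (z : ℝ × (Fin m → ℝ)) :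
    d0 (fun z => U z * d0 V z - d0 U z * V z) z = U z * d0 (d0 V) z - d0 (d0 U) z * V z := by
  have dU : ContDiff ℝ (⊤ : ℕ∞) (d0 U) := contDiff_fderiv_apply hU _
  have dV : ContDiff ℝ (⊤ : ℕ∞) (d0 V) := contDiff_fderiv_apply hV _
  have a := (hU.differentiable (by simp) z).hasFDerivAt
  have b := (hV.differentiable (by simp) z).hasFDerivAt
  have a' := (dU.differentiable (by simp) z).hasFDerivAt
  have b' := (dV.differentiable (by simp) z).hasFDerivAt
  have h := ((a.mul b').sub (a'.mul b)).fderiv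
  have h2 : d0 (fun z => U z * d0 V z - d0 U z * V z) z = _ := congrArg (fun L => L (1, 0)) h
  rw [h2]
  simp only [sub_apply, add_apply, smul_apply, smul_eq_mul]
  change U z * d0 (d0 V) z + d0 V z * d0 U z - (d0 U z * d0 V z + V z * d0 (d0 U) z) = _
  ring

lemma LocSpatBdd.current {m : ℕ} {U : ℝ × (Fin m → ℝ) → ℝ} (hUs : LocSpatBdd U)
    (V : ℝ × (Fin m → ℝ) → ℝ) : LocSpatBdd (fun z => U z * d0 V z - d0 U z * V z) :=
  (hUs.mul_right _).sub (LocSpatBdd.mul_right (hUs.fderiv_apply _) _)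

lemma contDiff_current {m : ℕ} {U V : ℝ × (Fin m → ℝ) → ℝ}
    (hU : ContDiff ℝ (⊤ : ℕ∞) U) (hV : ContDiff ℝ (⊤ : ℕ∞) V) :
    ContDiff ℝ (⊤ : ℕ∞) (fun z => U z * d0 V z - d0 U z * V z) :=
  (hU.mul (contDiff_fderiv_apply hV _)).sub ((contDiff_fderiv_apply hU _).mul hV)

/-- If `V` solves the homogeneous equation and `U` the one with source `F`, the symplectic form
changes at the rate `-∫ F V` over the time slice. -/
lemma hasDerivAt_sigmaT {m : ℕ} {r : ℝ} {U V F : ℝ × (Fin m → ℝ) → ℝ}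
    (hU : ContDiff ℝ (⊤ : ℕ∞) U) (hV : ContDiff ℝ (⊤ : ℕ∞) V) (hUs : LocSpatBdd U)
    (hKU : ∀ z, KG r U z = F z) (hKV : ∀ z, KG r V z = 0)
    (hFV : ∀ t, Integrable fun x => F (t, x) * V (t, x)) (t : ℝ) :
    HasDerivAt (fun s => sigmaT s U V) (-∫ x, F (t, x) * V (t, x)) t := by
  have hpt : ∀ x, d0 (fun z => U z * d0 V z - d0 U z * V z) (t, x)
      = (∑ k, (U (t, x) * dk k (dk k V) (t, x) - dk k (dk k U) (t, x) * V (t, x)))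
        - F (t, x) * V (t, x) := by
    intro x
    have h1 := hKU (t, x)
    have h2 := hKV (t, x)
    simp only [KG] at h1 h2
    rw [d0_current hU hV, Finset.sum_sub_distrib, ← Finset.mul_sum, ← Finset.sum_mul]
    linear_combination U (t, x) * h2 - V (t, x) * h1
  have hint : ∀ k, Integrable fun x =>
      U (t, x) * dk k (dk k V) (t, x) - dk k (dk k U) (t, x) * V (t, x) := by
    intro k
    have dU : ContDiff ℝ (⊤ : ℕ∞) (dk k U) := contDiff_fderiv_apply hU _
    have dV : ContDiff ℝ (⊤ : ℕ∞) (dk k V) := contDiff_fderiv_apply hV _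
    have ddU : ContDiff ℝ (⊤ : ℕ∞) (dk k (dk k U)) := contDiff_fderiv_apply dU _
    have ddV : ContDiff ℝ (⊤ : ℕ∞) (dk k (dk k V)) := contDiff_fderiv_apply dV _
    have hUs' : LocSpatBdd (dk k U) := hUs.fderiv_apply _
    have hUs'' : LocSpatBdd (dk k (dk k U)) := hUs'.fderiv_apply _
    exact ((hUs.mul_right _).integrable_slice (hU.continuous.mul ddV.continuous) t).sub
      ((hUs''.mul_right _).integrable_slice (ddU.continuous.mul hV.continuous) t)
  have hval : ∫ x, d0 (fun z => U z * d0 V z - d0 U z * V z) (t, x)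
      = -∫ x, F (t, x) * V (t, x) := by
    rw [integral_congr_ae (Filter.Eventually.of_forall hpt), integral_sub (integrable_finsetSum _ fun k _ => hint k) (hFV t),
      integral_finsetSum _ fun k _ => hint k]
    simp [integral_slice_green hU hV hUs]
  rw [← hval]
  exact (hUs.current V).hasDerivAt_integral (contDiff_current hU hV) t

/-! ### Supports and linearity -/

/-- Light cones over a compact set have bounded time slices, locally uniformly in time. -/
lemma locSpatBdd_of_causal {m : ℕ} {U : ℝ × (Fin m → ℝ) → ℝ} {S : Set (ℝ × (Fin m → ℝ))}
    (hS : IsCompact S)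
    (h : ∀ z, U z ≠ 0 → ∃ w ∈ S, mink (z - w) (z - w) ≤ 0) : LocSpatBdd U := by
  obtain ⟨C, hC⟩ := hS.isBounded.exists_norm_le
  intro T
  refine ⟨T + C + C, fun t x ht hx => ?_⟩
  by_contra hne
  obtain ⟨w, hw, hm⟩ := h _ hne
  have hwC := hC w hw
  have h1 : |w.1| ≤ C := (norm_fst_le w).trans hwC
  have h2 : ‖w.2‖ ≤ C := (norm_snd_le w).trans hwC
  have h3 : |t - w.1| ≤ T + C := (abs_sub t w.1).trans (add_le_add ht h1)
  have h4 : ‖x - w.2‖ ≤ T + C := by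
    refine (pi_norm_le_iff_of_nonneg ((abs_nonneg _).trans h3)).2 fun k => ?_
    refine le_trans ?_ h3
    simp only [mink, Prod.fst_sub, Prod.snd_sub, Pi.sub_apply] at hm
    have h5 := Finset.single_le_sum (f := fun k => (x k - w.2 k) * (x k - w.2 k))
      (fun i _ => mul_self_nonneg _) (Finset.mem_univ k)
    rw [Pi.sub_apply, Real.norm_eq_abs]
    exact sq_le_sq.1 (by nlinarith)
  have h6 := norm_add_le (x - w.2) w.2
  rw [sub_add_cancel] at h6
  linarith

lemma sigmaT_eq_zero_of_slice {m : ℕ} {U V : ℝ × (Fin m → ℝ) → ℝ} {A : Set ℝ} (hA : IsOpen A)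
    (h : ∀ z : ℝ × (Fin m → ℝ), z.1 ∈ A → U z = 0) {t : ℝ} (ht : t ∈ A) :
    sigmaT t U V = 0 := by
  have hd : ∀ x, d0 U (t, x) = 0 := by
    intro x
    have hev : U =ᶠ[nhds (t, x)] fun _ => (0 : ℝ) := by
      filter_upwards [(hA.preimage continuous_fst).mem_nhds (show (t, x) ∈ _ from ht)] with z hz
      exact h z hz
    simp [d0, hev.fderiv_eq]
  simp [sigmaT, hd, fun x => h (t, x) ht]

lemma KG_sub_s11 {m : ℕ} {r : ℝ} {U V : ℝ × (Fin m → ℝ) → ℝ}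
    (hU : ContDiff ℝ (⊤ : ℕ∞) U) (hV : ContDiff ℝ (⊤ : ℕ∞) V) (z : ℝ × (Fin m → ℝ)) :
    KG r (U - V) z = KG r U z - KG r V z := by
  have key : ∀ (v : ℝ × (Fin m → ℝ)) {A B : ℝ × (Fin m → ℝ) → ℝ},
      ContDiff ℝ (⊤ : ℕ∞) A → ContDiff ℝ (⊤ : ℕ∞) B →
      (fun z => fderiv ℝ (A - B) z v)
        = (fun z => fderiv ℝ A z v) - (fun z => fderiv ℝ B z v) := by
    intro v A B hA hB
    funext z
    rw [fderiv_sub (hA.differentiable (by simp) z) (hB.differentiable (by simp) z)]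
    rfl
  have e0 : d0 (d0 (U - V)) = d0 (d0 U) - d0 (d0 V) := by
    unfold d0
    rw [key _ hU hV, key _ (contDiff_fderiv_apply hU _) (contDiff_fderiv_apply hV _)]
  have ek : ∀ k, dk k (dk k (U - V)) = dk k (dk k U) - dk k (dk k V) := by
    intro k
    unfold dk
    rw [key _ hU hV, key _ (contDiff_fderiv_apply hU _) (contDiff_fderiv_apply hV _)]
  simp only [KG, e0, ek, Pi.sub_apply, Finset.sum_sub_distrib]
  ring

lemma sigmaT_sub_left {m : ℕ} {U W V : ℝ × (Fin m → ℝ) → ℝ}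
    (hU : ContDiff ℝ (⊤ : ℕ∞) U) (hW : ContDiff ℝ (⊤ : ℕ∞) W) (hV : ContDiff ℝ (⊤ : ℕ∞) V)
    (hUs : LocSpatBdd U) (hWs : LocSpatBdd W) (t : ℝ) :
    sigmaT t (U - W) V = sigmaT t U V - sigmaT t W V := by
  unfold sigmaT
  rw [← integral_sub ((hUs.current V).integrable_slice (contDiff_current hU hV).continuous t)
    ((hWs.current V).integrable_slice (contDiff_current hW hV).continuous t)]
  refine integral_congr_ae (Filter.Eventually.of_forall fun x => ?_)
  have : d0 (U - W) (t, x) = d0 U (t, x) - d0 W (t, x) := by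
    unfold d0
    rw [fderiv_sub (hU.differentiable (by simp) _) (hW.differentiable (by simp) _)]
    rfl
  simp only [this, Pi.sub_apply]
  ring

/-- for `F, G ∈ C_c^∞(ℝ^d)`, `σ_t(EF, EG) = −∫ F (EG)`, where
`EF = E⁺F − E⁻F` and `EG = E⁺G − E⁻G` are the propagator solutions. -/
theorem sigma_EF_EG (d : ℕ) (hd : 2 ≤ d) (r : ℝ)
    (F G : ℝ × (Fin (d-1) → ℝ) → ℝ)
    (hF : ContDiff ℝ (⊤ : ℕ∞) F) (hFsupp : HasCompactSupport F)
    (hG : ContDiff ℝ (⊤ : ℕ∞) G) (hGsupp : HasCompactSupport G)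
    (Fp Fm Gp Gm : ℝ × (Fin (d-1) → ℝ) → ℝ)
    (hFp : ContDiff ℝ (⊤ : ℕ∞) Fp ∧ (∀ z, KG r Fp z = F z) ∧ tsupport Fp ⊆ Jplus (tsupport F))
    (hFm : ContDiff ℝ (⊤ : ℕ∞) Fm ∧ (∀ z, KG r Fm z = F z) ∧ tsupport Fm ⊆ Jminus (tsupport F))
    (hGp : ContDiff ℝ (⊤ : ℕ∞) Gp ∧ (∀ z, KG r Gp z = G z) ∧ tsupport Gp ⊆ Jplus (tsupport G))
    (hGm : ContDiff ℝ (⊤ : ℕ∞) Gm ∧ (∀ z, KG r Gm z = G z) ∧ tsupport Gm ⊆ Jminus (tsupport G)) :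
    ∀ t : ℝ, sigmaT t (Fp - Fm) (Gp - Gm)
      = -∫ z : ℝ × (Fin (d-1) → ℝ), F z * (Gp z - Gm z) := by
  intro t
  obtain ⟨cFp, kFp, sFp⟩ := hFp
  obtain ⟨cFm, kFm, sFm⟩ := hFm
  obtain ⟨cGp, kGp, -⟩ := hGp
  obtain ⟨cGm, kGm, -⟩ := hGm
  have bFp : LocSpatBdd Fp := locSpatBdd_of_causal hFsupp fun z hz =>
    let ⟨w, hw, h, _⟩ := sFp (subset_tsupport _ hz)
    ⟨w, hw, h⟩
  have bFm : LocSpatBdd Fm := locSpatBdd_of_causal hFsupp fun z hz =>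
    let ⟨w, hw, h, _⟩ := sFm (subset_tsupport _ hz)
    ⟨w, hw, h⟩
  have cV : ContDiff ℝ (⊤ : ℕ∞) (Gp - Gm) := cGp.sub cGm
  have kV : ∀ z, KG r (Gp - Gm) z = 0 := fun z => by rw [KG_sub_s11 cGp cGm, kGp, kGm, sub_self]
  rw [sigmaT_sub_left cFp cFm cV bFp bFm]
  obtain ⟨C, hC⟩ := IsCompact.isBounded hFsupp |>.exists_norm_le
  have hbF : LocSpatBdd F := fun T => ⟨C, fun t x _ hx => by
    by_contra hne
    have := (norm_snd_le (t, x)).trans (hC _ (subset_tsupport _ hne))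
    exact absurd hx (not_lt.2 this)⟩
  have hFV : ∀ t, Integrable fun x => F (t, x) * (Gp - Gm) (t, x) := fun t =>
    (hbF.mul_right _).integrable_slice (hF.continuous.mul cV.continuous) t
  have hFVi : Integrable (fun z => F z * (Gp - Gm) z)
      ((volume : Measure ℝ).prod (volume : Measure (Fin (d-1) → ℝ))) :=
    (hF.continuous.mul cV.continuous).integrable_of_hasCompactSupport hFsupp.mul_right
  have hh : Integrable fun s => -∫ x, F (s, x) * (Gp - Gm) (s, x) := hFVi.integral_prod_left.neg
  -- the retarded solution has no contribution in the far past, the advanced one in the far future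
  have zp : ∀ s < -C, sigmaT s Fp (Gp - Gm) = 0 := fun s hs =>
    sigmaT_eq_zero_of_slice isOpen_Iio (fun z (hz : z.1 < -C) => by
      by_contra hne
      obtain ⟨w, hw, -, h⟩ := sFp (subset_tsupport _ hne)
      have := (abs_le.1 ((norm_fst_le w).trans (hC w hw))).1
      linarith) hs
  have zm : ∀ s > C, sigmaT s Fm (Gp - Gm) = 0 := fun s hs =>
    sigmaT_eq_zero_of_slice isOpen_Ioi (fun z (hz : C < z.1) => by
      by_contra hne
      obtain ⟨w, hw, -, h⟩ := sFm (subset_tsupport _ hne)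
      have := (abs_le.1 ((norm_fst_le w).trans (hC w hw))).2
      linarith) hs
  have Ip := integral_Iic_of_hasDerivAt_of_tendsto' (a := t)
    (fun s _ => hasDerivAt_sigmaT cFp cV bFp kFp kV hFV s) hh.integrableOn
    (tendsto_const_nhds.congr' (by
      filter_upwards [Filter.eventually_lt_atBot (-C)] with s hs using (zp s hs).symm))
  have Im := integral_Ioi_of_hasDerivAt_of_tendsto' (a := t)
    (fun s _ => hasDerivAt_sigmaT cFm cV bFm kFm kV hFV s) hh.integrableOn
    (tendsto_const_nhds.congr' (by
      filter_upwards [Filter.eventually_gt_atTop C] with s hs using (zm s hs).symm))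
  have tot := intervalIntegral.integral_Iic_add_Ioi (b := t) hh.integrableOn hh.integrableOn
  have fub : ∫ z : ℝ × (Fin (d-1) → ℝ), F z * (Gp z - Gm z)
      = ∫ s, ∫ x, F (s, x) * (Gp - Gm) (s, x) := integral_prod _ hFVi
  rw [fub, ← integral_neg]
  linarith
end
end

section
/- Let d ≥ 2. For every measurable f : ℝ^d → [0,∞], ∫_{ℝ^d} f(p) dp = ∫_ℝ ( ∫_{ℝ^{d−1}} 1_{\{|p⃗|² + r > 0\}} ( f(ω_r(p⃗), p⃗) + f(−ω_r(p⃗), p⃗) ) / (2 ω_r(p⃗)) dp⃗ ) dr, where ω_r(p⃗) = √(|p⃗|² + r). (This realizes the direct integral decomposition L²(ℝ^d, dp) = ∫^⊕ L²(V_r, dμ_r) dr over the mass shells V_r = {p : η(p,p) + r = 0} with their Lorentz invariant measures μ_r.) -/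
/-!
By Tonelli it suffices to fix the spatial momentum `q` and to show that, with `c = |q|²`, the
energy integral `∫ g(p⁰) dp⁰` equals `∫ 1_{c + r > 0} (g(√(c + r)) + g(-√(c + r))) / (2√(c + r)) dr`
(`lintegral_energy_eq`). Translation invariance reduces this to `c = 0`, and the substitution
`r = t²` on `(0, ∞)`, whose Jacobian `2t` cancels the weight, turns the right-hand side into
`∫_{t > 0} (g(t) + g(-t)) dt`.
-/

open Real Set MeasureTheory

noncomputable section

/-- `ω_r(p⃗) = √(|p⃗|² + r)`, the positive energy on the mass shell `V_r`. -/
def omegaR {m : ℕ} (r : ℝ) (q : Fin m → ℝ) : ℝ := Real.sqrt ((∑ k, (q k)^2) + r)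

/-- Folding an integral over `ℝ` onto the half-line by `t ↦ -t`. -/
lemma lintegral_eq_lintegral_Ioi_add_neg (g : ℝ → ENNReal) (hg : Measurable g) :
    ∫⁻ t, g t = ∫⁻ t in Ioi (0 : ℝ), (g t + g (-t)) := by
  have hneg : ∫⁻ t in Ioi (0 : ℝ), g (-t) = ∫⁻ t in Iio (0 : ℝ), g t := by
    have h := (Measure.measurePreserving_neg (volume : Measure ℝ)).setLIntegral_comp_preimage
      (s := Iio (0 : ℝ)) measurableSet_Iio hg
    have hset : (Neg.neg ⁻¹' Iio (0 : ℝ)) = Ioi 0 := by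
      ext t
      simp
    rw [← h, hset]
  rw [lintegral_add_left hg, hneg, ← lintegral_add_compl g (measurableSet_Ioi (a := (0 : ℝ))),
    compl_Ioi, setLIntegral_congr Iio_ae_eq_Iic]

/-- The substitution `s = t²` on the half-line. -/
lemma lintegral_Ioi_sq (F : ℝ → ENNReal) :
    ∫⁻ s in Ioi (0 : ℝ), F s = ∫⁻ t in Ioi (0 : ℝ), ENNReal.ofReal (2 * t) * F (t ^ 2) := by
  have himg : (fun t : ℝ => t ^ 2) '' Ioi 0 = Ioi 0 := by
    ext s
    constructor
    · rintro ⟨t, ht, rfl⟩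
      exact pow_pos (mem_Ioi.1 ht) 2
    · intro hs
      exact ⟨√s, Real.sqrt_pos.2 hs, Real.sq_sqrt (le_of_lt hs)⟩
  have hinj : InjOn (fun t : ℝ => t ^ 2) (Ioi 0) := by
    intro a ha b hb hab
    exact (pow_left_inj₀ (le_of_lt ha) (le_of_lt hb) two_ne_zero).1 hab
  have hder : ∀ t ∈ Ioi (0 : ℝ), HasDerivWithinAt (fun t : ℝ => t ^ 2) (2 * t) (Ioi 0) t := by
    intro t _
    simpa using (hasDerivAt_pow 2 t).hasDerivWithinAt
  have h := lintegral_image_eq_lintegral_abs_deriv_mul measurableSet_Ioi hder hinj F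
  rw [himg] at h
  rw [h]
  refine setLIntegral_congr_fun measurableSet_Ioi fun t ht => ?_
  have ht' : (0 : ℝ) < t := ht
  simp only [abs_of_pos (mul_pos two_pos ht')]

/-- Disintegration of the energy integral at fixed spatial momentum, with `c = |p⃗|²`. -/
lemma lintegral_energy_eq (g : ℝ → ENNReal) (hg : Measurable g) (c : ℝ) :
    ∫⁻ t, g t = ∫⁻ r : ℝ, (if 0 < c + r then
      (g √(c + r) + g (-√(c + r))) / ENNReal.ofReal (2 * √(c + r)) else 0) := by
  rw [lintegral_add_left_eq_self (μ := (volume : Measure ℝ)) (fun s : ℝ => if 0 < s then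
      (g √s + g (-√s)) / ENNReal.ofReal (2 * √s) else 0) c]
  have hind : (fun s : ℝ => if 0 < s then
      (g √s + g (-√s)) / ENNReal.ofReal (2 * √s) else 0) =
      (Ioi (0 : ℝ)).indicator fun s => (g √s + g (-√s)) / ENNReal.ofReal (2 * √s) := by
    ext s
    simp [indicator_apply]
  rw [hind, lintegral_indicator measurableSet_Ioi, lintegral_Ioi_sq,
    lintegral_eq_lintegral_Ioi_add_neg g hg]
  refine setLIntegral_congr_fun measurableSet_Ioi fun t ht => ?_
  have ht' : (0 : ℝ) < t := ht
  simp only [Real.sqrt_sq ht'.le]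
  rw [ENNReal.mul_div_cancel (by simpa using ht') ENNReal.ofReal_ne_top]

/-- the direct integral decomposition of Lebesgue measure on ℝ^d
over the mass shells `V_r` with their Lorentz invariant measures `dμ_r = dp⃗/(2ω_r)`:
for every measurable `f : ℝ^d → [0,∞]`,
`∫ f(p) dp = ∫ dr ∫ 1_{|p⃗|²+r>0} (f(ω_r,p⃗) + f(−ω_r,p⃗))/(2ω_r) dp⃗`. -/
theorem direct_integral_mass_shells (d : ℕ) (hd : 2 ≤ d)
    (f : ℝ × (Fin (d-1) → ℝ) → ENNReal) (hf : Measurable f) :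
    ∫⁻ p : ℝ × (Fin (d-1) → ℝ), f p =
      ∫⁻ r : ℝ, ∫⁻ q : Fin (d-1) → ℝ,
        (if 0 < (∑ k, (q k)^2) + r then
          (f (omegaR r q, q) + f (-omegaR r q, q)) / ENNReal.ofReal (2 * omegaR r q)
        else 0) := by
  have homega : Measurable fun x : ℝ × (Fin (d-1) → ℝ) => omegaR x.1 x.2 := by
    unfold omegaR
    fun_prop
  rw [lintegral_lintegral_swap]
  · rw [Measure.volume_eq_prod, lintegral_prod_symm' f hf]
    refine lintegral_congr fun q => ?_
    exact lintegral_energy_eq (fun t => f (t, q)) (by fun_prop) (∑ k, (q k)^2)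
  · refine Measurable.aemeasurable (Measurable.ite ?_ ?_ measurable_const)
    · exact measurableSet_lt measurable_const (by fun_prop)
    · exact ((hf.comp (homega.prodMk measurable_snd)).add
        (hf.comp (homega.neg.prodMk measurable_snd))).div (homega.const_mul 2).ennreal_ofReal
end
end

section
/- Let d ≥ 3, N ≥ 1, and set D = (d−1) + N(d−2), with spatial coordinates z = (x¹,…,x^{d−1}, (x_n^k)_{1≤n≤N, 1≤k≤d−2}) ∈ ℝ^D and time coordinate x⁰ = t. Let U : ℝ × ℝ^D → ℝ be a smooth solution of the string light cone equation ∂₀² U = Σ_{k=1}^{d−1} ∂²U/∂(x^k)² + Σ_{n=1}^N Σ_{k=1}^{d−2} ( ∂²U/∂(x_n^k)² − 2 n x_n^k ∂U/∂x_n^k ) + 2U. If U(0, ·) and ∂₀U(0, ·) vanish on the Euclidean ball { z : |z − z₀| ≤ R } for some z₀ ∈ ℝ^D and R > 0, then U(t, z) = 0 for all (t,z) with |z − z₀| + |t| ≤ R. (Thus the field is local with respect to the string light cone metric −(dx⁰)² + Σ(dx^k)² + Σ(dx_n^k)².) -/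
/-!
The proof is the classical energy method, with a smooth weight in place of integration over
the truncated light cone. For a solution `U`, let `e = U_t² + |∇U|² + U²`, let
`q = (R - t)² - |z - z₀|²`, and let `w = φ(q)`, where `φ` is smooth, nondecreasing, zero on
`(-∞, 0]` and positive on `(0, ∞)`. Then `w_t = -2 (R - t) φ'(q)` and `∇w = -2 (z - z₀) φ'(q)`, so
`|∇w| ≤ -w_t` for `t < R`. Expanding `∂ₜ(w e)` and using the equation,
`∂ₜ(w e) - 2 div(w U_t ∇U) = (w_t e - 2 U_t ∇w · ∇U) + w · (lower order terms)`.
The bracket is nonpositive by Cauchy–Schwarz (`flux_bound`), and the last term is at most `C w e`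
because the first-order coefficients are bounded on the ball of radius `R` (`lower_order_bound`);
this is `energy_pointwise`. For fixed `t` in `[0, R)` the weight vanishes off that ball, so the
divergence integrates to zero and `E(t) = ∫ w e dz` satisfies `E' ≤ C E` and `E(0) = 0`. Grönwall
gives `E = 0`, hence `U = 0` where `w > 0`, i.e. in the open forward cone
(`vanishing_in_open_cone`). Continuity gives the closed cone, and time reversal gives `t < 0`.

The estimate is carried out on a finite-dimensional space with a basis `b`, whose coordinates define
the Euclidean length `sqLen b`; the norm of the space itself plays no metric role, so the product
and sup norms on the space of spatial variables are harmless.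
-/

open Real Set

noncomputable section

/-- time derivative `∂₀U` on ℝ × (ℝ^{d−1} × ℝ^{N×(d−2)}). -/
def dT {a N b : ℕ} (U : ℝ × (Fin a → ℝ) × (Fin N → Fin b → ℝ) → ℝ) :
    ℝ × (Fin a → ℝ) × (Fin N → Fin b → ℝ) → ℝ :=
  fun z => fderiv ℝ U z (1, 0, 0)

/-- derivative in the center of mass spatial variable `x^k`. -/
def dXk {a N b : ℕ} (k : Fin a) (U : ℝ × (Fin a → ℝ) × (Fin N → Fin b → ℝ) → ℝ) :
    ℝ × (Fin a → ℝ) × (Fin N → Fin b → ℝ) → ℝ :=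
  fun z => fderiv ℝ U z (0, Pi.single k 1, 0)

/-- derivative in the internal mode variable `x_n^k`. -/
def dXnk {a N b : ℕ} (n : Fin N) (k : Fin b)
    (U : ℝ × (Fin a → ℝ) × (Fin N → Fin b → ℝ) → ℝ) :
    ℝ × (Fin a → ℝ) × (Fin N → Fin b → ℝ) → ℝ :=
  fun z => fderiv ℝ U z (0, 0, Pi.single n (Pi.single k 1))

/-- the Euclidean norm on the spatial variables `z = ((x^k), (x_n^k))`. -/
def spNorm {a N b : ℕ} (z : (Fin a → ℝ) × (Fin N → Fin b → ℝ)) : ℝ :=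
  Real.sqrt ((∑ k, (z.1 k)^2) + ∑ n, ∑ k, (z.2 n k)^2)

section Energy

open MeasureTheory Module
open scoped ContDiff Topology

/-! ### Directional derivatives -/

/-- The derivative of `F` in the constant direction `v`, as a function on the whole space.
The operators `dT`, `dXk`, `dXnk` are all of this form. -/
def dir {E : Type*} [NormedAddCommGroup E] [NormedSpace ℝ E] (v : E) (F : E → ℝ) : E → ℝ :=
  fun p => fderiv ℝ F p v

section Dir

variable {E : Type*} [NormedAddCommGroup E] [NormedSpace ℝ E]

lemma contDiff_dir {F : E → ℝ} (hF : ContDiff ℝ ∞ F) (v : E) : ContDiff ℝ ∞ (dir v F) := by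
  have h : ContDiff ℝ ∞ (fderiv ℝ F) := hF.fderiv_right (by simp)
  exact h.clm_apply contDiff_const

lemma dir_comm {F : E → ℝ} (hF : ContDiff ℝ ∞ F) (v w : E) (p : E) :
    dir v (dir w F) p = dir w (dir v F) p := by
  have h : ContDiff ℝ ∞ (fderiv ℝ F) := hF.fderiv_right (by simp)
  have hd : DifferentiableAt ℝ (fderiv ℝ F) p := h.differentiable (by simp) p
  have key : ∀ v w : E, dir v (dir w F) p = fderiv ℝ (fderiv ℝ F) p v w := by
    intro v w
    unfold dir
    rw [fderiv_clm_apply hd (differentiableAt_const w)]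
    simp
  rw [key, key]
  exact (hF.contDiffAt.isSymmSndFDerivAt (by
    rw [minSmoothness_of_isRCLikeNormedField]
    exact WithTop.coe_le_coe.2 le_top)).eq v w

lemma dir_mul {F G : E → ℝ} (hF : ContDiff ℝ ∞ F) (hG : ContDiff ℝ ∞ G) (v p : E) :
    dir v (fun x => F x * G x) p = dir v F p * G p + F p * dir v G p := by
  unfold dir
  rw [fderiv_fun_mul (hF.differentiable (by simp) p) (hG.differentiable (by simp) p)]
  simp
  ring

lemma dir_add {F G : E → ℝ} (hF : ContDiff ℝ ∞ F) (hG : ContDiff ℝ ∞ G) (v p : E) :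
    dir v (fun x => F x + G x) p = dir v F p + dir v G p := by
  unfold dir
  rw [fderiv_fun_add (hF.differentiable (by simp) p) (hG.differentiable (by simp) p)]
  simp

lemma dir_sum {ι : Type*} [Fintype ι] {F : ι → E → ℝ} (hF : ∀ i, ContDiff ℝ ∞ (F i)) (v p : E) :
    dir v (fun x => ∑ i, F i x) p = ∑ i, dir v (F i) p := by
  unfold dir
  rw [fderiv_fun_sum (fun i _ => (hF i).differentiable (by simp) p)]
  simp

lemma dir_comp_equiv (L : E ≃L[ℝ] E) (F : E → ℝ) (v : E) :
    dir v (F ∘ L) = dir (L v) F ∘ L := by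
  funext p
  simp [dir, L.comp_right_fderiv]

lemma dir_neg_neg (F : E → ℝ) (v : E) : dir (-v) (dir (-v) F) = dir v (dir v F) := by
  have h : dir (-v) F = fun p => -(dir v F p) := by
    funext p
    simp [dir]
  rw [h]
  funext p
  change fderiv ℝ (fun p => -(dir v F p)) p (-v) = fderiv ℝ (dir v F) p v
  rw [fderiv_fun_neg]
  simp

end Dir

/-! ### Calculus under the integral sign -/

section Integrals

variable {V : Type*} [NormedAddCommGroup V] [NormedSpace ℝ V]

lemma dir_slice {G : ℝ × V → ℝ} (hG : ContDiff ℝ ∞ G) (t : ℝ) (z v : V) :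
    dir ((0 : ℝ), v) G (t, z) = fderiv ℝ (fun y => G (t, y)) z v := by
  have h1 : HasFDerivAt G (fderiv ℝ G (t, z)) (t, z) :=
    (hG.differentiable (by simp) (t, z)).hasFDerivAt
  have h2 : HasFDerivAt (fun y : V => (t, y)) (ContinuousLinearMap.inr ℝ ℝ V) z :=
    hasFDerivAt_prodMk_right t z
  have h3 := (h1.comp z h2).fderiv
  change dir ((0 : ℝ), v) G (t, z) = fderiv ℝ (G ∘ fun y => (t, y)) z v
  rw [h3]
  simp [dir]

lemma dir_time {G : ℝ × V → ℝ} (hG : ContDiff ℝ ∞ G) (t : ℝ) (z : V) :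
    HasDerivAt (fun s => G (s, z)) (dir ((1 : ℝ), (0 : V)) G (t, z)) t := by
  have h1 : HasFDerivAt G (fderiv ℝ G (t, z)) (t, z) :=
    (hG.differentiable (by simp) (t, z)).hasFDerivAt
  have h2 : HasDerivAt (fun s : ℝ => (s, z)) ((1 : ℝ), (0 : V)) t :=
    (hasDerivAt_id t).prodMk (hasDerivAt_const t z)
  exact h1.comp_hasDerivAt t h2

variable [MeasurableSpace V] [BorelSpace V] (μ : Measure V) [μ.IsAddHaarMeasure]

lemma hasDerivAt_setIntegral {K : Set V} (hK : IsCompact K) {F : ℝ × V → ℝ}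
    (hF : ContDiff ℝ ∞ F) (t : ℝ) :
    HasDerivAt (fun s => ∫ z in K, F (s, z) ∂μ)
      (∫ z in K, dir ((1 : ℝ), (0 : V)) F (t, z) ∂μ) t := by
  have hF' := contDiff_dir hF ((1 : ℝ), (0 : V))
  have hc : ∀ s, Continuous fun z => F (s, z) := fun s => hF.continuous.comp (by fun_prop)
  have hc' : ∀ s, Continuous fun z => dir ((1 : ℝ), (0 : V)) F (s, z) :=
    fun s => hF'.continuous.comp (by fun_prop)
  obtain ⟨C, hC⟩ := ((isCompact_closedBall t 1).prod hK).exists_bound_of_continuousOn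
    hF'.continuous.continuousOn
  have : IsFiniteMeasure (μ.restrict K) := ⟨by simpa using hK.measure_lt_top⟩
  refine (hasDerivAt_integral_of_dominated_loc_of_deriv_le (μ := μ.restrict K)
    (F := fun s z => F (s, z)) (F' := fun s z => dir ((1 : ℝ), (0 : V)) F (s, z))
    (bound := fun _ => C) (Metric.closedBall_mem_nhds t one_pos) ?_ ?_ ?_ ?_ ?_ ?_).2
  · exact Filter.Eventually.of_forall fun s => (hc s).aestronglyMeasurable
  · exact (hc t).continuousOn.integrableOn_compact hK
  · exact (hc' t).aestronglyMeasurable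
  · refine (ae_restrict_iff' hK.measurableSet).2 (Filter.Eventually.of_forall ?_)
    intro z hz s hs
    exact hC (s, z) ⟨hs, hz⟩
  · exact integrable_const C
  · exact Filter.Eventually.of_forall fun z s _ => dir_time hF s z

/-- The integral of a derivative vanishes for a function vanishing off a compact set `K`. -/
lemma setIntegral_dir_eq_zero [FiniteDimensional ℝ V] {K : Set V} (hK : IsCompact K) {G : ℝ × V → ℝ}
    (hG : ContDiff ℝ ∞ G) (t : ℝ) (h0 : ∀ z ∉ K, G (t, z) = 0) (v : V) :
    ∫ z in K, dir ((0 : ℝ), v) G (t, z) ∂μ = 0 := by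
  set g : V → ℝ := fun z => G (t, z) with hg
  have hgs : ContDiff ℝ ∞ g := hG.comp (by fun_prop)
  have hsupp : HasCompactSupport g := HasCompactSupport.intro hK h0
  have hts : tsupport g ⊆ K :=
    closure_minimal (fun z hz => by_contra fun h => hz (h0 z h)) hK.isClosed
  have hd : ∀ z, dir ((0 : ℝ), v) G (t, z) = fderiv ℝ g z v := fun z => dir_slice hG t z v
  simp_rw [hd]
  rw [setIntegral_eq_integral_of_forall_compl_eq_zero]
  · have hcont : Continuous fun z => fderiv ℝ g z v :=
      (hgs.continuous_fderiv (by simp)).clm_apply continuous_const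
    have hcs : HasCompactSupport fun z => fderiv ℝ g z v := hsupp.fderiv_apply (𝕜 := ℝ) v
    have := integral_mul_fderiv_eq_neg_fderiv_mul_of_integrable (μ := μ) (f := fun _ : V => (1 : ℝ))
      (g := g) (v := v) (by simp)
      (by simpa using hcont.integrable_of_hasCompactSupport hcs)
      (by simpa using hgs.continuous.integrable_of_hasCompactSupport hsupp)
      (fun x _ => differentiableAt_const _)
      (fun x _ => hgs.differentiable (by simp) x)
    simpa using this
  · intro z hz
    have : fderiv ℝ g z = 0 := by
      by_contra h
      exact hz (hts (support_fderiv_subset ℝ h))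
    simp [this]

end Integrals

/-! ### Pointwise estimates -/

/-- On the light cone the inward flux of energy dominates: here `r` is the radius at the given
time, `c` the position, `T` and `u` the time and space derivatives of the field. -/
lemma flux_bound {ι : Type*} [Fintype ι] {r T : ℝ} (c u : ι → ℝ) (hr : 0 < r)
    (hc : ∑ i, c i ^ 2 ≤ r ^ 2) :
    2 * T * ∑ i, c i * u i ≤ r * (T ^ 2 + ∑ i, u i ^ 2) := by
  have hcs := Finset.sum_mul_sq_le_sq_mul_sq Finset.univ c u
  set X := ∑ i, c i * u i
  set S := ∑ i, u i ^ 2 with hS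
  have hS0 : 0 ≤ S := Finset.sum_nonneg fun i _ => sq_nonneg _
  have hX : X ^ 2 ≤ r ^ 2 * S := hcs.trans (mul_le_mul_of_nonneg_right hc hS0)
  refine le_of_mul_le_mul_left ?_ hr
  nlinarith [sq_nonneg (r * T - X)]

lemma lower_order_bound {ι : Type*} [Fintype ι] {A T y : ℝ} (a u : ι → ℝ) (hA : 0 ≤ A)
    (ha : ∀ i, |a i| ≤ A) :
    T * (-(∑ i, a i * u i) + 2 * y) + y * T ≤
      (A * (Fintype.card ι + 1) + 3) * ((T ^ 2 + ∑ i, u i ^ 2 + y ^ 2) / 2) := by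
  have h1 : -(T * ∑ i, a i * u i) ≤ ∑ i, A * ((T ^ 2 + u i ^ 2) / 2) := by
    rw [Finset.mul_sum, ← Finset.sum_neg_distrib]
    refine Finset.sum_le_sum fun i _ => ?_
    have h2 : |a i * (T * u i)| ≤ A * ((T ^ 2 + u i ^ 2) / 2) := by
      rw [abs_mul]
      refine mul_le_mul (ha i) ?_ (abs_nonneg _) hA
      rw [abs_le]
      constructor <;> nlinarith [sq_nonneg (T + u i), sq_nonneg (T - u i)]
    calc -(T * (a i * u i)) = -(a i * (T * u i)) := by ring
      _ ≤ _ := (neg_le_abs _).trans h2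
  have h3 : ∑ i, A * ((T ^ 2 + u i ^ 2) / 2) =
      A * (Fintype.card ι * T ^ 2 + ∑ i, u i ^ 2) / 2 := by
    rw [← Finset.mul_sum, ← Finset.sum_div, Finset.sum_add_distrib]
    simp
    ring
  rw [h3] at h1
  set S := ∑ i, u i ^ 2 with hS
  have hS0 : 0 ≤ S := Finset.sum_nonneg fun i _ => sq_nonneg _
  have hn : (0 : ℝ) ≤ Fintype.card ι := by positivity
  have e1 : 0 ≤ A * Fintype.card ι * S := by positivity
  have e2 : 0 ≤ A * Fintype.card ι * y ^ 2 := by positivity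
  have e3 : 0 ≤ A * T ^ 2 := by positivity
  have e4 : 0 ≤ A * y ^ 2 := by positivity
  nlinarith [sq_nonneg (T - y), sq_nonneg (T + y)]

/-! ### The weighted energy estimate -/

section Weight

variable {V : Type*} [NormedAddCommGroup V] [NormedSpace ℝ V] [FiniteDimensional ℝ V]
  {ι : Type*} (b : Basis ι ℝ V) (z₀ : V) (R : ℝ)

lemma contDiff_repr (i : ι) : ContDiff ℝ ∞ (fun z => b.repr z i) :=
  (LinearMap.toContinuousLinearMap (b.coord i)).contDiff

variable [Fintype ι]

/-- The squared Euclidean length of `z` in the coordinates of `b`. -/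
def sqLen (z : V) : ℝ := ∑ i, (b.repr z i) ^ 2

/-- A smooth weight, positive inside the cone `|z - z₀| < R - t` and zero outside it.
The squares make it smooth at the axis `z = z₀`. For `t > R` it is positive on the opposite
cone too, so it is used only for `t ≤ R`. -/
def weight (p : ℝ × V) : ℝ := expNegInvGlue ((R - p.1) ^ 2 - sqLen b (p.2 - z₀))

lemma contDiff_sqLen : ContDiff ℝ ∞ (sqLen b) :=
  ContDiff.sum fun i _ => (contDiff_repr b i).pow 2

lemma contDiff_coneFun :
    ContDiff ℝ ∞ (fun p : ℝ × V => (R - p.1) ^ 2 - sqLen b (p.2 - z₀)) := by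
  have h := contDiff_sqLen b
  fun_prop

lemma contDiff_weight : ContDiff ℝ ∞ (weight b z₀ R) :=
  expNegInvGlue.contDiff.comp (contDiff_coneFun b z₀ R)

lemma isCompact_ball : IsCompact {z : V | sqLen b (z - z₀) ≤ R ^ 2} := by
  have hcl : IsClosed {z : V | sqLen b (z - z₀) ≤ R ^ 2} :=
    isClosed_le ((contDiff_sqLen b).continuous.comp (by fun_prop)) continuous_const
  -- The set is the image under an affine homeomorphism of a subset of a product of intervals.
  let e : V ≃L[ℝ] (ι → ℝ) := b.equivFun.toContinuousLinearEquiv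
  have hbox : IsCompact (Set.pi univ fun _ : ι => Icc (-|R|) |R|) :=
    isCompact_univ_pi fun _ => isCompact_Icc
  have himg : IsCompact ((fun x => e.symm x + z₀) '' (Set.pi univ fun _ : ι => Icc (-|R|) |R|)) :=
    hbox.image (by fun_prop)
  refine himg.of_isClosed_subset hcl fun z hz => ⟨e (z - z₀), ?_, by simp⟩
  intro i _
  have h1 : (b.repr (z - z₀) i) ^ 2 ≤ R ^ 2 :=
    (Finset.single_le_sum (f := fun i => (b.repr (z - z₀) i) ^ 2)
      (fun i _ => sq_nonneg _) (Finset.mem_univ i)).trans hz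
  have h2 := abs_le.1 (sq_le_sq.1 h1)
  simpa [e] using h2

lemma dir_weight (p w : ℝ × V) :
    dir w (weight b z₀ R) p =
      deriv expNegInvGlue ((R - p.1) ^ 2 - sqLen b (p.2 - z₀)) *
        (-2 * (R - p.1) * w.1 - 2 * ∑ i, b.repr (p.2 - z₀) i * b.repr w.2 i) := by
  have hq : HasDerivAt (fun s : ℝ => (R - (p.1 + s * w.1)) ^ 2 -
      ∑ i, (b.repr (p.2 - z₀) i + s * b.repr w.2 i) ^ 2)
      (-2 * (R - p.1) * w.1 - 2 * ∑ i, b.repr (p.2 - z₀) i * b.repr w.2 i) 0 := by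
    have h1 : HasDerivAt (fun s : ℝ => (R - (p.1 + s * w.1)) ^ 2) (-2 * (R - p.1) * w.1) 0 := by
      have := ((((hasDerivAt_id (0 : ℝ)).mul_const w.1).const_add p.1).const_sub R).pow 2
      refine this.congr_deriv ?_
      simp
    have h2 : HasDerivAt (fun s : ℝ => ∑ i, (b.repr (p.2 - z₀) i + s * b.repr w.2 i) ^ 2)
        (∑ i, 2 * (b.repr (p.2 - z₀) i * b.repr w.2 i)) 0 := by
      refine HasDerivAt.fun_sum fun i _ => ?_
      have := (((hasDerivAt_id (0 : ℝ)).mul_const (b.repr w.2 i)).const_add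
        (b.repr (p.2 - z₀) i)).pow 2
      refine this.congr_deriv ?_
      simp
      ring
    rw [Finset.mul_sum]
    exact h1.sub h2
  have hφ : HasDerivAt expNegInvGlue
      (deriv expNegInvGlue ((R - p.1) ^ 2 - sqLen b (p.2 - z₀)))
      ((R - p.1) ^ 2 - sqLen b (p.2 - z₀)) :=
    ((expNegInvGlue.contDiff (n := 1)).differentiable (by simp) _).hasDerivAt
  have hcomp : HasDerivAt (fun s : ℝ => weight b z₀ R (p + s • w))
      (deriv expNegInvGlue ((R - p.1) ^ 2 - sqLen b (p.2 - z₀)) *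
        (-2 * (R - p.1) * w.1 - 2 * ∑ i, b.repr (p.2 - z₀) i * b.repr w.2 i)) 0 := by
    have h0 : (R - p.1) ^ 2 - sqLen b (p.2 - z₀) = (R - (p.1 + 0 * w.1)) ^ 2 -
        ∑ i, (b.repr (p.2 - z₀) i + 0 * b.repr w.2 i) ^ 2 := by
      simp [sqLen]
    have h := HasDerivAt.comp (0 : ℝ) (h0 ▸ hφ) hq
    rw [← h0] at h
    refine h.congr_of_eventuallyEq (Filter.Eventually.of_forall fun s => ?_)
    simp only [weight, sqLen, Function.comp]
    have hs : p.2 + s • w.2 - z₀ = (p.2 - z₀) + s • w.2 := by abel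
    simp [hs]
  have hF : HasFDerivAt (weight b z₀ R) (fderiv ℝ (weight b z₀ R) p) (p + (0 : ℝ) • w) := by
    simpa using ((contDiff_weight b z₀ R).differentiable (by simp) p).hasFDerivAt
  have hline : HasDerivAt (fun s : ℝ => p + s • w) w 0 := by
    simpa using ((hasDerivAt_id (0 : ℝ)).smul_const w).const_add p
  have h := hF.comp_hasDerivAt (0 : ℝ) hline
  exact h.unique hcomp

lemma deriv_glue_nonneg (x : ℝ) : 0 ≤ deriv expNegInvGlue x :=
  expNegInvGlue.monotone.deriv_nonneg

lemma deriv_glue_of_nonpos {x : ℝ} (hx : x ≤ 0) : deriv expNegInvGlue x = 0 := by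
  -- Every such `x` is a global minimum.
  refine IsLocalMin.deriv_eq_zero (Filter.Eventually.of_forall fun y => ?_)
  rw [expNegInvGlue.zero_of_nonpos hx]
  exact expNegInvGlue.nonneg y

end Weight

section Estimate

variable {V : Type*} [NormedAddCommGroup V] [NormedSpace ℝ V] {ι : Type*} [Fintype ι]

/-- Twice the energy density of `U`, with the mass-like term `U ^ 2` included. -/
def density (b : Basis ι ℝ V) (U : ℝ × V → ℝ) (p : ℝ × V) : ℝ :=
  dir (1, 0) U p * dir (1, 0) U p + ∑ i, dir (0, b i) U p * dir (0, b i) U p + U p * U p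

lemma contDiff_density (b : Basis ι ℝ V) {U : ℝ × V → ℝ} (hU : ContDiff ℝ ∞ U) :
    ContDiff ℝ ∞ (density b U) := by
  have h := fun v => contDiff_dir hU v
  exact (((h _).mul (h _)).add (ContDiff.sum fun i _ => (h _).mul (h _))).add (hU.mul hU)

lemma density_nonneg (b : Basis ι ℝ V) (U : ℝ × V → ℝ) (p : ℝ × V) : 0 ≤ density b U p :=
  add_nonneg (add_nonneg (mul_self_nonneg _) (Finset.sum_nonneg fun _ _ => mul_self_nonneg _))
    (mul_self_nonneg _)

lemma dir_density (b : Basis ι ℝ V) {U : ℝ × V → ℝ} (hU : ContDiff ℝ ∞ U) (v p : ℝ × V) :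
    dir v (density b U) p = 2 * (dir (1, 0) U p * dir v (dir (1, 0) U) p) +
      2 * (∑ i, dir (0, b i) U p * dir v (dir (0, b i) U) p) + 2 * (U p * dir v U p) := by
  have h := fun v => contDiff_dir hU v
  unfold density
  rw [dir_add (((h _).mul (h _)).add (ContDiff.sum fun i _ => (h _).mul (h _))) (hU.mul hU),
    dir_add ((h _).mul (h _)) (ContDiff.sum fun i _ => (h _).mul (h _)),
    dir_sum fun i => (h _).mul (h _), dir_mul (h _) (h _), dir_mul hU hU, Finset.mul_sum]
  have : ∀ i, dir v (fun x => dir (0, b i) U x * dir (0, b i) U x) p =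
      2 * (dir (0, b i) U p * dir v (dir (0, b i) U) p) := by
    intro i
    rw [dir_mul (h _) (h _)]
    ring
  simp_rw [this]
  ring

variable [FiniteDimensional ℝ V]

/-- The local energy inequality: up to a spatial divergence, the time derivative of the weighted
energy density is controlled by the weighted energy density itself. -/
lemma energy_pointwise (b : Basis ι ℝ V) (z₀ : V) {R A : ℝ} (hA : 0 ≤ A) (a : ι → V → ℝ)
    {U : ℝ × V → ℝ} (hU : ContDiff ℝ ∞ U)
    (heq : ∀ p, dir (1, 0) (dir (1, 0) U) p =
      ∑ i, (dir (0, b i) (dir (0, b i) U) p - a i p.2 * dir (0, b i) U p) + 2 * U p)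
    {p : ℝ × V} (hp : p.1 < R) (ha : ∀ i, |a i p.2| ≤ A) :
    dir (1, 0) (fun x => weight b z₀ R x * density b U x) p ≤
      2 * (∑ i, dir (0, b i)
        (fun x => weight b z₀ R x * (dir (1, 0) U x * dir (0, b i) U x)) p) +
      (A * (Fintype.card ι + 1) + 3) * (weight b z₀ R p * density b U p) := by
  have h := fun v => contDiff_dir hU v
  have hw := contDiff_weight b z₀ R
  rw [dir_mul hw (contDiff_density b hU), dir_density b hU, heq p]
  have hG : ∀ i, dir (0, b i)
      (fun x => weight b z₀ R x * (dir (1, 0) U x * dir (0, b i) U x)) p =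
      dir (0, b i) (weight b z₀ R) p * (dir (1, 0) U p * dir (0, b i) U p) +
      weight b z₀ R p * (dir (0, b i) U p * dir (1, 0) (dir (0, b i) U) p +
        dir (1, 0) U p * dir (0, b i) (dir (0, b i) U) p) := by
    intro i
    rw [dir_mul hw ((h _).mul (h _)), dir_mul (h _) (h _), dir_comm hU (0, b i) (1, 0)]
    ring
  simp_rw [hG]
  have hwt : dir (1, 0) (weight b z₀ R) p =
      deriv expNegInvGlue ((R - p.1) ^ 2 - sqLen b (p.2 - z₀)) * (-2 * (R - p.1)) := by
    rw [dir_weight]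
    simp
  have hwi : ∀ i, dir (0, b i) (weight b z₀ R) p =
      deriv expNegInvGlue ((R - p.1) ^ 2 - sqLen b (p.2 - z₀)) *
        (-2 * b.repr (p.2 - z₀) i) := by
    classical
    intro i
    rw [dir_weight]
    simp [Finsupp.single_apply]
  simp_rw [hwi]
  rw [hwt]
  have hw0 : 0 ≤ weight b z₀ R p := expNegInvGlue.nonneg _
  set φ := deriv expNegInvGlue ((R - p.1) ^ 2 - sqLen b (p.2 - z₀)) with hφ
  set w := weight b z₀ R p
  set T := dir (1, 0) U p
  set y := U p
  have hden : density b U p = T ^ 2 + ∑ i, dir (0, b i) U p ^ 2 + y ^ 2 := by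
    simp only [density, sq]
    rfl
  rw [hden]
  have hflux : φ * (2 * T * ∑ i, b.repr (p.2 - z₀) i * dir (0, b i) U p) ≤
      φ * ((R - p.1) * (T ^ 2 + ∑ i, dir (0, b i) U p ^ 2)) := by
    rcases le_or_gt ((R - p.1) ^ 2 - sqLen b (p.2 - z₀)) 0 with hq | hq
    · rw [hφ, deriv_glue_of_nonpos hq]
      simp
    · exact mul_le_mul_of_nonneg_left
        (flux_bound _ _ (sub_pos.2 hp) (sub_pos.1 hq).le) (deriv_glue_nonneg _)
  have hmass : 0 ≤ φ * ((R - p.1) * y ^ 2) :=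
    mul_nonneg (deriv_glue_nonneg _) (mul_nonneg (sub_pos.2 hp).le (sq_nonneg _))
  have hlow := mul_le_mul_of_nonneg_left
    (lower_order_bound (T := T) (y := y) (fun i => a i p.2) (fun i => dir (0, b i) U p) hA ha) hw0
  have hsum : ∑ i, (φ * (-2 * b.repr (p.2 - z₀) i) * (T * dir (0, b i) U p) +
      w * (dir (0, b i) U p * dir (1, 0) (dir (0, b i) U) p +
        T * dir (0, b i) (dir (0, b i) U) p)) =
      -φ * (2 * T * ∑ i, b.repr (p.2 - z₀) i * dir (0, b i) U p) +
      w * (∑ i, dir (0, b i) U p * dir (1, 0) (dir (0, b i) U) p) +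
      w * (T * ∑ i, dir (0, b i) (dir (0, b i) U) p) := by
    simp only [Finset.mul_sum, ← Finset.sum_add_distrib]
    refine Finset.sum_congr rfl fun i _ => ?_
    ring
  rw [hsum, Finset.sum_sub_distrib]
  linarith

/-- Uniqueness in the open forward cone, for a wave equation with arbitrary continuous first-order
coefficients and the flat principal part given by the basis `b`. -/
theorem vanishing_in_open_cone (b : Basis ι ℝ V) (z₀ : V) {R : ℝ} (a : ι → V → ℝ)
    (ha : ∀ i, Continuous (a i)) {U : ℝ × V → ℝ} (hU : ContDiff ℝ ∞ U)
    (heq : ∀ p, dir (1, 0) (dir (1, 0) U) p =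
      ∑ i, (dir (0, b i) (dir (0, b i) U) p - a i p.2 * dir (0, b i) U p) + 2 * U p)
    (hdata : ∀ z, sqLen b (z - z₀) < R ^ 2 → U (0, z) = 0 ∧ dir (1, 0) U (0, z) = 0)
    {t : ℝ} (ht0 : 0 ≤ t) (htR : t < R) {z : V} (hz : sqLen b (z - z₀) < (R - t) ^ 2) :
    U (t, z) = 0 := by
  borelize V
  obtain ⟨μ, hμ⟩ : ∃ μ : Measure V, μ.IsAddHaarMeasure := ⟨Measure.addHaar, inferInstance⟩
  have h := fun v => contDiff_dir hU v
  have hw := contDiff_weight b z₀ R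
  have hsq := (contDiff_sqLen b).continuous
  set K := {z : V | sqLen b (z - z₀) ≤ R ^ 2} with hKdef
  have hK : IsCompact K := isCompact_ball b z₀ R
  obtain ⟨A, hA, haA⟩ : ∃ A, 0 ≤ A ∧ ∀ i, ∀ z ∈ K, |a i z| ≤ A := by
    obtain ⟨A, hA⟩ := hK.exists_bound_of_continuousOn (f := fun z => ∑ i, |a i z|)
      (continuous_finsetSum _ fun i _ => (ha i).abs).continuousOn
    refine ⟨|A|, abs_nonneg _, fun i z hz => ?_⟩
    calc |a i z| ≤ ∑ i, |a i z| :=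
          Finset.single_le_sum (f := fun i => |a i z|) (fun i _ => abs_nonneg _)
            (Finset.mem_univ i)
      _ ≤ A := (le_abs_self _).trans (hA z hz)
      _ ≤ |A| := le_abs_self A
  set C := A * (Fintype.card ι + 1) + 3
  set F : ℝ × V → ℝ := fun x => weight b z₀ R x * density b U x with hFdef
  have hF : ContDiff ℝ ∞ F := hw.mul (contDiff_density b hU)
  have hF0 : ∀ x, 0 ≤ F x := fun x => mul_nonneg (expNegInvGlue.nonneg _) (density_nonneg b U x)
  have hwK : ∀ s, 0 ≤ s → s < R → ∀ z ∉ K, weight b z₀ R (s, z) = 0 := by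
    intro s hs0 hsR z hz
    apply expNegInvGlue.zero_of_nonpos
    have h1 : R ^ 2 < sqLen b (z - z₀) := not_le.1 hz
    have h2 : (R - s) ^ 2 ≤ R ^ 2 := by nlinarith
    simp only
    linarith
  have hslice : ∀ {H : ℝ × V → ℝ}, ContDiff ℝ ∞ H → ∀ s, Continuous fun z => H (s, z) :=
    fun hH s => hH.continuous.comp (by fun_prop)
  have hint : ∀ {H : ℝ × V → ℝ}, ContDiff ℝ ∞ H → ∀ s,
      IntegrableOn (fun z => H (s, z)) K μ :=
    fun hH s => (hslice hH s).continuousOn.integrableOn_compact hK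
  set E : ℝ → ℝ := fun s => ∫ z in K, F (s, z) ∂μ with hE
  have hEd : ∀ s, HasDerivAt E (∫ z in K, dir ((1 : ℝ), (0 : V)) F (s, z) ∂μ) s :=
    hasDerivAt_setIntegral μ hK hF
  have hE0 : E 0 = 0 := by
    refine setIntegral_eq_zero_of_forall_eq_zero fun z _ => ?_
    rcases le_or_gt (R ^ 2) (sqLen b (z - z₀)) with hq | hq
    · have : weight b z₀ R (0, z) = 0 := by
        apply expNegInvGlue.zero_of_nonpos
        simpa using hq
      simp [hFdef, this]
    · -- The data vanish on an open set, so the spatial derivatives vanish there too.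
      have hev : (fun y => U (0, y)) =ᶠ[𝓝 z] fun _ => (0 : ℝ) := by
        have hopen : IsOpen {y : V | sqLen b (y - z₀) < R ^ 2} :=
          isOpen_lt (hsq.comp (by fun_prop)) continuous_const
        filter_upwards [hopen.mem_nhds hq] with y hy using (hdata y hy).1
      have hi : ∀ i, dir (0, b i) U (0, z) = 0 := by
        intro i
        rw [dir_slice hU, hev.fderiv_eq]
        simp
      simp [hFdef, density, hi, hdata z hq]
  have hE' : ∀ s, 0 ≤ s → s < R → ∫ z in K, dir ((1 : ℝ), (0 : V)) F (s, z) ∂μ ≤ C * E s := by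
    intro s hs0 hsR
    set G : ι → ℝ × V → ℝ :=
      fun i x => weight b z₀ R x * (dir (1, 0) U x * dir (0, b i) U x) with hGdef
    have hG : ∀ i, ContDiff ℝ ∞ (G i) := fun i => hw.mul ((h _).mul (h _))
    have hGi : ∀ i, IntegrableOn (fun z => dir (0, b i) (G i) (s, z)) K μ :=
      fun i => hint (contDiff_dir (hG i) _) s
    have hGs : IntegrableOn (fun z => 2 * ∑ i, dir (0, b i) (G i) (s, z)) K μ :=
      (integrable_finsetSum _ fun i _ => hGi i).const_mul 2
    calc ∫ z in K, dir ((1 : ℝ), (0 : V)) F (s, z) ∂μ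
        ≤ ∫ z in K, (2 * (∑ i, dir (0, b i) (G i) (s, z)) + C * F (s, z)) ∂μ := by
          refine setIntegral_mono_on (hint (contDiff_dir hF _) s)
            (hGs.add ((hint hF s).const_mul C)) hK.measurableSet fun z hz => ?_
          exact energy_pointwise b z₀ hA a hU heq (p := (s, z)) hsR fun i => haA i z hz
      _ = C * E s := by
          rw [integral_add hGs ((hint hF s).const_mul C), integral_const_mul, integral_const_mul,
            integral_finsetSum _ fun i _ => hGi i]
          have hz : ∀ i, ∫ z in K, dir (0, b i) (G i) (s, z) ∂μ = 0 := fun i =>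
            setIntegral_dir_eq_zero μ hK (hG i) s
              (fun z hz => by simp [hGdef, hwK s hs0 hsR z hz]) (b i)
          simp [hz, hE]
  -- Grönwall: `exp (-C s) * E s` is nonincreasing on `[0, t]`.
  have hEt : E t ≤ 0 := by
    have hd : ∀ s, HasDerivAt (fun s => Real.exp (-C * s) * E s)
        (Real.exp (-C * s) * (-C) * E s +
          Real.exp (-C * s) * ∫ z in K, dir ((1 : ℝ), (0 : V)) F (s, z) ∂μ) s := by
      intro s
      refine HasDerivAt.mul ?_ (hEd s)
      simpa using ((hasDerivAt_id s).const_mul (-C)).exp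
    have hanti : AntitoneOn (fun s => Real.exp (-C * s) * E s) (Icc 0 t) := by
      refine antitoneOn_of_deriv_nonpos (convex_Icc 0 t)
        (fun s _ => (hd s).continuousAt.continuousWithinAt)
        (fun s _ => (hd s).differentiableAt.differentiableWithinAt) fun s hs => ?_
      rw [interior_Icc] at hs
      rw [(hd s).deriv]
      have := mul_le_mul_of_nonneg_left (hE' s hs.1.le (hs.2.trans htR))
        (Real.exp_pos (-C * s)).le
      linarith
    have h1 := hanti (left_mem_Icc.2 ht0) (right_mem_Icc.2 ht0) ht0
    simp only [hE0, mul_zero] at h1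
    exact nonpos_of_mul_nonpos_right h1 (Real.exp_pos _)
  -- A continuous nonnegative function with zero integral vanishes.
  have hFz : F (t, z) = 0 := by
    by_contra hne
    have hoff : ∀ y ∉ K, F (t, y) = 0 := fun y hy => by simp [hFdef, hwK t ht0 htR y hy]
    have hpos := (hslice hF t).integral_pos_of_hasCompactSupport_nonneg_nonzero (μ := μ)
      (HasCompactSupport.intro hK hoff) (fun y => hF0 (t, y)) hne
    rw [← setIntegral_eq_integral_of_forall_compl_eq_zero hoff] at hpos
    exact absurd hEt (not_le.2 hpos)
  have hwz : 0 < weight b z₀ R (t, z) := expNegInvGlue.pos_of_pos (sub_pos.2 hz)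
  have hdz : density b U (t, z) = 0 := (mul_eq_zero.1 hFz).resolve_left hwz.ne'
  have h1 : U (t, z) * U (t, z) ≤ density b U (t, z) :=
    le_add_of_nonneg_left
      (add_nonneg (mul_self_nonneg _) (Finset.sum_nonneg fun _ _ => mul_self_nonneg _))
  rw [hdz] at h1
  exact mul_self_eq_zero.1 (le_antisymm h1 (mul_self_nonneg _))

/-- The closed forward cone follows from the open one by continuity. -/
theorem vanishing_in_forward_cone (b : Basis ι ℝ V) (z₀ : V) {R : ℝ} (hR : 0 < R) (a : ι → V → ℝ)
    (ha : ∀ i, Continuous (a i)) {U : ℝ × V → ℝ} (hU : ContDiff ℝ ∞ U)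
    (heq : ∀ p, dir (1, 0) (dir (1, 0) U) p =
      ∑ i, (dir (0, b i) (dir (0, b i) U) p - a i p.2 * dir (0, b i) U p) + 2 * U p)
    (hdata : ∀ z, sqLen b (z - z₀) < R ^ 2 → U (0, z) = 0 ∧ dir (1, 0) U (0, z) = 0)
    {t : ℝ} (ht0 : 0 ≤ t) {z : V} (hz : √(sqLen b (z - z₀)) + t ≤ R) :
    U (t, z) = 0 := by
  -- Approach `(t, z)` along the segment from the centre `(0, z₀)`, which runs in the open cone.
  set f : ℝ → ℝ := fun s => U (s * t, z₀ + s • (z - z₀)) with hf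
  have hcont : Continuous f := hU.continuous.comp (by fun_prop)
  have hclosed : IsClosed {s | f s = 0} := isClosed_eq hcont continuous_const
  have hsub : Ico (0 : ℝ) 1 ⊆ {s | f s = 0} := by
    intro s hs
    have hL : 0 ≤ sqLen b (z - z₀) := Finset.sum_nonneg fun _ _ => sq_nonneg _
    have hl := Real.sqrt_nonneg (sqLen b (z - z₀))
    have hlt : s * R < R := by nlinarith [hs.2]
    have hle : s * (√(sqLen b (z - z₀)) + t) ≤ s * R := mul_le_mul_of_nonneg_left hz hs.1
    have hsl : 0 ≤ s * √(sqLen b (z - z₀)) := mul_nonneg hs.1 hl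
    refine vanishing_in_open_cone b z₀ a ha hU heq hdata (mul_nonneg hs.1 ht0) (by linarith) ?_
    have hlen : sqLen b (z₀ + s • (z - z₀) - z₀) = (s * √(sqLen b (z - z₀))) ^ 2 := by
      rw [mul_pow, Real.sq_sqrt hL, add_sub_cancel_left]
      simp only [sqLen, map_smul, Finsupp.smul_apply, smul_eq_mul, mul_pow, Finset.mul_sum]
    rw [hlen]
    exact pow_lt_pow_left₀ (by linarith) hsl two_ne_zero
  have h1 : (1 : ℝ) ∈ {s | f s = 0} := by
    refine hclosed.closure_subset_iff.2 hsub ?_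
    rw [closure_Ico zero_ne_one]
    simp
  simpa [hf] using h1

theorem vanishing_in_cone (b : Basis ι ℝ V) (z₀ : V) {R : ℝ} (hR : 0 < R) (a : ι → V → ℝ)
    (ha : ∀ i, Continuous (a i)) {U : ℝ × V → ℝ} (hU : ContDiff ℝ ∞ U)
    (heq : ∀ p, dir (1, 0) (dir (1, 0) U) p =
      ∑ i, (dir (0, b i) (dir (0, b i) U) p - a i p.2 * dir (0, b i) U p) + 2 * U p)
    (hdata : ∀ z, sqLen b (z - z₀) < R ^ 2 → U (0, z) = 0 ∧ dir (1, 0) U (0, z) = 0)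
    {t : ℝ} {z : V} (hz : √(sqLen b (z - z₀)) + |t| ≤ R) :
    U (t, z) = 0 := by
  rcases le_total 0 t with ht | ht
  · rw [abs_of_nonneg ht] at hz
    exact vanishing_in_forward_cone b z₀ hR a ha hU heq hdata ht hz
  · rw [abs_of_nonpos ht] at hz
    -- The equation is invariant under time reversal.
    let L : (ℝ × V) ≃L[ℝ] (ℝ × V) :=
      (ContinuousLinearEquiv.neg ℝ).prodCongr (ContinuousLinearEquiv.refl ℝ V)
    have hL : ∀ p, L p = (-p.1, p.2) := fun p => rfl
    have hτ : L (1, 0) = -((1 : ℝ), (0 : V)) := by simp [hL]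
    have hσ : ∀ v : V, L (0, v) = (0, v) := fun v => by simp [hL]
    have h1 : dir (1, 0) (U ∘ L) = dir (-((1 : ℝ), (0 : V))) U ∘ L := by
      rw [dir_comp_equiv, hτ]
    have h2 : dir (1, 0) (dir (1, 0) (U ∘ L)) = dir (1, 0) (dir (1, 0) U) ∘ L := by
      rw [h1, dir_comp_equiv, hτ, dir_neg_neg]
    have h3 : ∀ v : V, dir (0, v) (U ∘ L) = dir (0, v) U ∘ L := fun v => by
      rw [dir_comp_equiv, hσ]
    have h4 : ∀ v : V, dir (0, v) (dir (0, v) (U ∘ L)) = dir (0, v) (dir (0, v) U) ∘ L :=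
      fun v => by rw [h3, dir_comp_equiv, hσ]
    have := vanishing_in_forward_cone b z₀ hR a ha (U := U ∘ L) (hU.comp L.contDiff)
      (fun p => by
        rw [h2]
        simp only [h4]
        simp only [h3, Function.comp]
        exact heq (L p))
      (fun y hy => by
        rw [h1]
        have h0 : L (0, y) = (0, y) := by simp [hL]
        have hneg : dir (-((1 : ℝ), (0 : V))) U (0, y) = -dir (1, 0) U (0, y) :=
          map_neg (fderiv ℝ U (0, y)) _
        simp only [Function.comp, h0, hneg, neg_eq_zero]
        exact hdata y hy)
      (t := -t) (by linarith) hz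
    simpa [hL] using this

end Estimate

end Energy

/-- domain of dependence for the string light cone equation.  If the
Cauchy data at time 0 of a smooth solution of
`∂₀²U = Σ_k ∂ₖ²U + Σ_{n,k}(∂²U/∂(xₙᵏ)² − 2n xₙᵏ ∂U/∂xₙᵏ) + 2U`
vanish on the Euclidean ball of radius `R` about `z₀`, then `U(t,z) = 0` whenever
`|z − z₀| + |t| ≤ R`; i.e. the field is local for the string light cone metric
`−(dx⁰)² + Σ(dx^k)² + Σ(dxₙᵏ)²`. -/
theorem string_light_cone_domain_of_dependence (d N : ℕ) (hd : 3 ≤ d) (hN : 1 ≤ N)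
    (U : ℝ × (Fin (d-1) → ℝ) × (Fin N → Fin (d-2) → ℝ) → ℝ)
    (hU : ContDiff ℝ (⊤ : ℕ∞) U)
    (heq : ∀ z, dT (dT U) z =
      (∑ k, dXk k (dXk k U) z) +
      (∑ n : Fin N, ∑ k : Fin (d-2),
        (dXnk n k (dXnk n k U) z - 2 * ((n : ℕ) + 1 : ℝ) * z.2.2 n k * dXnk n k U z)) +
      2 * U z)
    (z₀ : (Fin (d-1) → ℝ) × (Fin N → Fin (d-2) → ℝ)) (R : ℝ) (hR : 0 < R)
    (hdata : ∀ z : (Fin (d-1) → ℝ) × (Fin N → Fin (d-2) → ℝ),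
      spNorm (z - z₀) ≤ R → U (0, z) = 0 ∧ dT U (0, z) = 0) :
    ∀ (t : ℝ) (z : (Fin (d-1) → ℝ) × (Fin N → Fin (d-2) → ℝ)),
      spNorm (z - z₀) + |t| ≤ R → U (t, z) = 0 := by
  let b : Module.Basis (Fin (d-1) ⊕ (Σ _ : Fin N, Fin (d-2))) ℝ
      ((Fin (d-1) → ℝ) × (Fin N → Fin (d-2) → ℝ)) :=
    (Pi.basisFun ℝ (Fin (d-1))).prod (Pi.basis fun _ => Pi.basisFun ℝ (Fin (d-2)))
  let a : (Fin (d-1) ⊕ (Σ _ : Fin N, Fin (d-2))) →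
      ((Fin (d-1) → ℝ) × (Fin N → Fin (d-2) → ℝ)) → ℝ :=
    Sum.elim (fun _ _ => 0) fun j z => 2 * ((j.1 : ℕ) + 1 : ℝ) * z.2 j.1 j.2
  have ha : ∀ i, Continuous (a i) := by
    rintro (k | ⟨n, k⟩)
    · exact continuous_const
    · change Continuous fun z : (Fin (d-1) → ℝ) × (Fin N → Fin (d-2) → ℝ) =>
        2 * ((n : ℕ) + 1 : ℝ) * z.2 n k
      fun_prop
  have hlen : ∀ z, sqLen b z = (∑ k, (z.1 k)^2) + ∑ n, ∑ k, (z.2 n k)^2 := by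
    intro z
    simp [sqLen, b, Fintype.sum_sum_type, Fintype.sum_sigma]
  have hnorm : ∀ z, spNorm z = √(sqLen b z) := fun z => by rw [hlen, spNorm]
  have hbl : ∀ k, b (Sum.inl k) = (Pi.single k 1, 0) := fun k => by
    simp [b, Module.Basis.prod_apply]
  have hbr : ∀ n k, b (Sum.inr ⟨n, k⟩) = (0, Pi.single n (Pi.single k 1)) := fun n k => by
    simp [b, Module.Basis.prod_apply]
  intro t z hz
  rw [hnorm] at hz
  refine vanishing_in_cone b z₀ hR a ha hU (fun p => ?_) (fun y hy => ?_) hz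
  · refine (heq p).trans ?_
    simp only [Fintype.sum_sum_type, Fintype.sum_sigma, hbl, hbr, a, Sum.elim_inl, Sum.elim_inr,
      zero_mul, sub_zero]
    rfl
  · refine hdata y ?_
    rw [hnorm]
    exact Real.sqrt_le_iff.2 ⟨hR.le, hy.le⟩
end
end
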